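/- arXiv:1311.0137 — 2 statements merged into one kernel-verified Lean document; each statement's English description precedes it below -/
import Mathlib

section
/- For every λ ≥ 2, the class of λ-flat graphs is not closed under taking topological minors and is not closed under taking contractions; that is, there exist a λ-flat graph with a topological minor that is not λ-flat, and a λ-flat graph with a contraction that is not λ-flat. -/
/-!
Definitions for wall-by-wall distance, λ-flat graphs and ξ-nearly planar graphs,
following Grigoriev, Koutsonas and Thilikos, "Nearly Planar Graphs and λ-flat Graphs".

A plane graph is modelled combinatorially as a simple graph equipped with a rotation
system (a cyclic order of the edges incident to each vertex) that is planar, i.e.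
satisfies Euler's formula (with faces counted as orbits of the face-tracing successor
on darts, corrected for isolated vertices and the number of connected components).

A graph embedding in the sphere (where edges may cross, but only at points that are
not vertices) is modelled topologically by a `Drawing`: an injective placement of the
vertices on the unit sphere of `ℝ³` together with, for each edge, a simple arc joining
the images of its endpoints whose interior avoids all vertices.
-/

namespace WBW

/-- The set of edges of `G` incident to the vertex `v`. -/
def incidentSet {V : Type*} (G : SimpleGraph V) (v : V) : Set (Sym2 V) :=
  {e | e ∈ G.edgeSet ∧ v ∈ e}

/-- A simple graph together with a rotation system: for every vertex `v`, a
permutation of `Sym2 V` which fixes every non-incident edge and is a single cycle on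
the set of edges incident to `v` (the cyclic order `σ_v` of the drawing). -/
structure RotationSystem (V : Type*) where
  G : SimpleGraph V
  rot : V → Equiv.Perm (Sym2 V)
  rot_cycleOn : ∀ v, (rot v).IsCycleOn (incidentSet G v)
  rot_fixed : ∀ v, ∀ e ∉ incidentSet G v, rot v e = e

variable {V : Type*}

/-- The face-tracing successor on darts: the dart `(u,v)` is followed by the dart
leaving `v` along the edge succeeding `s(u,v)` in the cyclic order around `v`. -/
noncomputable def RotationSystem.faceNext (R : RotationSystem V) (d : R.G.Dart) :
    R.G.Dart :=
  have hmem : d.edge ∈ incidentSet R.G d.toProd.2 :=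
    ⟨d.edge_mem, by rcases d with ⟨⟨a, b⟩, h⟩; simp [SimpleGraph.Dart.edge]⟩
  have hmem' : R.rot d.toProd.2 d.edge ∈ incidentSet R.G d.toProd.2 :=
    (R.rot_cycleOn d.toProd.2).1.mapsTo hmem
  ⟨(d.toProd.2, Sym2.Mem.other hmem'.2), by
    have h := Sym2.other_spec hmem'.2
    have h2 : R.rot d.toProd.2 d.edge ∈ R.G.edgeSet := hmem'.1
    rw [← h] at h2
    exact h2⟩

/-- The number of faces of a rotation system: the number of orbits of the
face-tracing successor on darts. -/
noncomputable def RotationSystem.numFaces (R : RotationSystem V) : ℕ :=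
  Nat.card (Quot (fun a b : R.G.Dart => R.faceNext a = b))

/-- A rotation system is plane (it is an embedding of the graph in the sphere without
crossings) iff it satisfies Euler's formula, componentwise; isolated vertices are
accounted for separately, since they carry no dart. -/
def RotationSystem.IsPlane (R : RotationSystem V) : Prop :=
  Nat.card V + R.numFaces + Nat.card {v : V | ∀ w, ¬ R.G.Adj v w} =
    Nat.card R.G.edgeSet + 2 * Nat.card R.G.ConnectedComponent

/-- Two edges are attached if they share a vertex `v` and appear consecutively in the
cyclic order `σ_v` or its inverse. -/
def Attached (R : RotationSystem V) (e e' : Sym2 V) : Prop :=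
  ∃ v : V, e ∈ incidentSet R.G v ∧ e' ∈ incidentSet R.G v ∧
    (R.rot v e = e' ∨ R.rot v e' = e)

/-- A wall-by-wall walk: a nonempty sequence of distinct edges of `R.G` in which
every two consecutive edges are attached. -/
def IsWbwWalk (R : RotationSystem V) (L : List (Sym2 V)) : Prop :=
  L ≠ [] ∧ L.Nodup ∧ (∀ e ∈ L, e ∈ R.G.edgeSet) ∧ L.Chain' (Attached R)

/-- An `(x,y)`-wall-by-wall walk: a wall-by-wall walk whose first edge is incident to
`x` and whose last edge is incident to `y`. -/
def IsWbwWalkFromTo (R : RotationSystem V) (x y : V) (L : List (Sym2 V)) : Prop :=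
  IsWbwWalk R L ∧ (∃ e, L.head? = some e ∧ x ∈ e) ∧ (∃ e, L.getLast? = some e ∧ y ∈ e)

/-- The wall-by-wall distance between `x` and `y`: the least number of edges of an
`(x,y)`-wall-by-wall walk (`⊤` if there is no such walk). -/
noncomputable def wbwDist (R : RotationSystem V) (x y : V) : ℕ∞ :=
  sInf {n : ℕ∞ | ∃ L, IsWbwWalkFromTo R x y L ∧ (L.length : ℕ∞) = n}

/-- The `λ`-power of a plane graph: keep all edges and make adjacent all pairs of
vertices at wall-by-wall distance at most `λ`. -/
def RotationSystem.power (R : RotationSystem V) (l : ℕ) : SimpleGraph V :=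
  R.G ⊔ SimpleGraph.fromRel (fun x y => wbwDist R x y ≤ (l : ℕ∞))

/-- `H` is a subgraph of `G` via the injection `τ`. -/
def SubgraphVia {U V : Type*} (H : SimpleGraph U) (G : SimpleGraph V) (τ : U → V) :
    Prop :=
  Function.Injective τ ∧ ∀ x y, H.Adj x y → G.Adj (τ x) (τ y)

/-- A graph is `λ`-flat if it is a subgraph of the `λ`-power of some plane graph. -/
def IsFlat (l : ℕ) {V : Type*} (G : SimpleGraph V) : Prop :=
  ∃ (W : Type) (_ : Finite W) (R : RotationSystem W) (τ : V → W),
    R.IsPlane ∧ SubgraphVia G (R.power l) τ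

/-- The unit sphere in `ℝ³`. -/
def unitSphere : Set (EuclideanSpace ℝ (Fin 3)) := Metric.sphere 0 1

/-- A drawing (embedding) of a graph in the sphere: vertices are placed injectively,
every edge is drawn as a simple arc joining the images of its two endpoints, and the
interior of every arc avoids all vertex images (so edges may meet, away from their
endpoints, only at points that are not vertices). -/
structure Drawing {V : Type*} (G : SimpleGraph V) where
  vmap : V → unitSphere
  vmap_inj : Function.Injective vmap
  arc : Sym2 V → C(Set.Icc (0 : ℝ) 1, unitSphere)
  arc_inj : ∀ e ∈ G.edgeSet, Function.Injective (arc e)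
  arc_ends : ∀ e ∈ G.edgeSet,
    Sym2.map vmap e =
      s(arc e ⟨0, Set.mem_Icc.mpr (by norm_num)⟩, arc e ⟨1, Set.mem_Icc.mpr (by norm_num)⟩)
  interior_avoids : ∀ e ∈ G.edgeSet, ∀ t : Set.Icc (0 : ℝ) 1,
    (t : ℝ) ≠ 0 → (t : ℝ) ≠ 1 → arc e t ∉ Set.range vmap

/-- The crossings of the edge `e` in a drawing: pairs consisting of another edge `e'`
and a point, not a vertex, lying on the arcs of both `e` and `e'`. -/
def crossingSet {V : Type*} {G : SimpleGraph V} (D : Drawing G) (e : Sym2 V) :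
    Set (Sym2 V × unitSphere) :=
  {q | q.1 ∈ G.edgeSet ∧ q.1 ≠ e ∧ q.2 ∈ Set.range (D.arc e) ∧
    q.2 ∈ Set.range (D.arc q.1) ∧ q.2 ∉ Set.range D.vmap}

/-- A graph is `ξ`-nearly planar if it has a drawing in the sphere in which every
edge is crossed at most `ξ` times. -/
def IsNearlyPlanar (x : ℕ) {V : Type*} (G : SimpleGraph V) : Prop :=
  ∃ D : Drawing G, ∀ e ∈ G.edgeSet,
    (crossingSet D e).Finite ∧ (crossingSet D e).ncard ≤ x

/-- `λ(G)`: the least `λ` for which `G` is `λ`-flat. -/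
noncomputable def flatNum {V : Type*} (G : SimpleGraph V) : ℕ :=
  sInf {l | IsFlat l G}

/-- `ξ(G)`: the least `ξ` for which `G` is `ξ`-nearly planar. -/
noncomputable def nearNum {V : Type*} (G : SimpleGraph V) : ℕ :=
  sInf {x | IsNearlyPlanar x G}

/-- A graph is 3-connected if it has more than 3 vertices and removing any at most 2
vertices leaves it connected. -/
def ThreeConnected {V : Type*} (G : SimpleGraph V) : Prop :=
  3 < Nat.card V ∧ ∀ s : Set V, s.ncard ≤ 2 → (G.induce sᶜ).Connected

/-- A plane graph is triangulated if every face is bounded by a triangle, i.e. every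
orbit of the face-tracing successor has length exactly 3. -/
def RotationSystem.Triangulated (R : RotationSystem V) : Prop :=
  ∀ d : R.G.Dart, R.faceNext (R.faceNext (R.faceNext d)) = d ∧ R.faceNext d ≠ d

/-- `H` is a topological minor of `G`: some subdivision of `H` is a subgraph of `G`,
equivalently the branch vertices embed injectively into `G` and the edges of `H` are
realized by internally disjoint paths of `G` avoiding the branch vertices. -/
def IsTopMinor {U V : Type*} (H : SimpleGraph U) (G : SimpleGraph V) : Prop :=
  ∃ τ : U → V, Function.Injective τ ∧
    ∃ P : ∀ ⦃x y : U⦄, H.Adj x y → G.Walk (τ x) (τ y),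
      (∀ ⦃x y : U⦄ (h : H.Adj x y), (P h).IsPath) ∧
      (∀ ⦃x y : U⦄ (h : H.Adj x y), ∀ v ∈ (P h).support,
        v ∈ Set.range τ → v = τ x ∨ v = τ y) ∧
      (∀ ⦃x y x' y' : U⦄ (h : H.Adj x y) (h' : H.Adj x' y'), s(x, y) ≠ s(x', y') →
        ∀ v, v ∈ (P h).support → v ∈ (P h').support → v ∈ Set.range τ)

/-- `H` is a contraction of `G`: `H` is obtained from `G` by contracting edges,
equivalently there is a surjection `V(G) → V(H)` with connected fibres such that the
edges of `H` are exactly the pairs of distinct fibres joined by an edge of `G`. -/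
def IsContractionOf {U V : Type*} (H : SimpleGraph U) (G : SimpleGraph V) : Prop :=
  ∃ f : V → U, Function.Surjective f ∧
    (∀ u : U, (G.induce (f ⁻¹' {u})).Connected) ∧
    (∀ a b : U, H.Adj a b ↔ a ≠ b ∧ ∃ x y, G.Adj x y ∧ f x = a ∧ f y = b)

/-- The medial graph of a plane graph `G`: its vertices are the edges of `G`, two of
them being adjacent iff they are attached (this is the dual of the radial graph). -/
def medial (R : RotationSystem V) : SimpleGraph {e : Sym2 V // e ∈ R.G.edgeSet} :=
  SimpleGraph.fromRel (fun e f => Attached R e.1 f.1)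

/-- The `(n × n)`-grid graph. -/
def gridGraph (n : ℕ) : SimpleGraph (Fin n × Fin n) :=
  SimpleGraph.fromRel (fun a b =>
    (a.1 = b.1 ∧ (a.2 : ℕ) + 1 = (b.2 : ℕ)) ∨ (a.2 = b.2 ∧ (a.1 : ℕ) + 1 = (b.1 : ℕ)))

/-- The faces of a rotation system: orbits of the face-tracing successor on darts. -/
def RotationSystem.Face (R : RotationSystem V) : Type _ :=
  Quot (fun a b : R.G.Dart => R.faceNext a = b)

/-- The edge `e` lies on the boundary of the face `F`. -/
def EdgeOnFace (R : RotationSystem V) (e : Sym2 V) (F : R.Face) : Prop :=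
  ∃ d : R.G.Dart, Quot.mk _ d = F ∧ d.edge = e

/-- A wall-by-wall walk passes through the face `F` if two consecutive edges of the
walk both lie on the boundary of `F`. -/
def WalkThroughFace (R : RotationSystem V) (L : List (Sym2 V)) (F : R.Face) : Prop :=
  ∃ (l₁ : List (Sym2 V)) (e₁ e₂ : Sym2 V) (l₂ : List (Sym2 V)),
    L = l₁ ++ e₁ :: e₂ :: l₂ ∧ EdgeOnFace R e₁ F ∧ EdgeOnFace R e₂ F

end WBW
namespace FNC
open WBW Finset

section homology
variable {W : Type} [Fintype W] (R : RotationSystem W)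
open Classical

set_option linter.unusedSectionVars false
set_option linter.deprecated false

theorem faceNext_fst (d : R.G.Dart) : (R.faceNext d).fst = d.snd := rfl

theorem faceNext_edge (d : R.G.Dart) : (R.faceNext d).edge = R.rot d.snd d.edge := by
  unfold RotationSystem.faceNext
  simp only [SimpleGraph.Dart.edge]
  exact Sym2.other_spec _

theorem faceNext_inj {d d' : R.G.Dart} (h : d.snd = d'.snd)
    (h' : R.faceNext d = R.faceNext d') : d = d' := by
  have h1 := faceNext_edge R d
  rw [h', faceNext_edge R d', h] at h1
  have h2 := (R.rot d'.snd).injective h1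
  rcases (SimpleGraph.dart_edge_eq_iff _ _).1 h2 with h3 | h3
  · exact h3.symm
  · exfalso
    have : d.snd = d'.fst := by
      have := congrArg (fun x : R.G.Dart => x.fst) h3
      simpa using this.symm
    rw [h] at this
    exact d'.fst_ne_snd this.symm

/-- Going once around a vertex, an invariant function changes an even number of times. -/
theorem around_zero (g : R.G.Dart → ZMod 2) (hg : ∀ d, g (R.faceNext d) = g d) (v : W) :
    ∑ d ∈ univ.filter (fun d : R.G.Dart => d.fst = v), (g d + g d.symm) = 0 := by
  set So := univ.filter (fun d : R.G.Dart => d.fst = v) with hSo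
  have himg : So.image (fun d => R.faceNext d.symm) = So := by
    apply Finset.eq_of_subset_of_card_le
    · intro d hd
      simp only [mem_image] at hd
      obtain ⟨a, ha, rfl⟩ := hd
      simp only [hSo, mem_filter, mem_univ, true_and] at ha ⊢
      rw [faceNext_fst]; simpa using ha
    · rw [Finset.card_image_of_injOn]
      intro a ha b hb hab
      simp only [hSo, coe_filter, mem_univ, true_and, Set.mem_setOf_eq] at ha hb
      have := faceNext_inj R (d := a.symm) (d' := b.symm) (by simp [ha, hb]) hab
      exact SimpleGraph.Dart.symm_involutive.injective this
  have h1 : ∑ d ∈ So, g d.symm = ∑ d ∈ So, g d := by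
    conv_rhs => rw [← himg]
    rw [Finset.sum_image]
    · exact Finset.sum_congr rfl (fun d _ => (hg _).symm)
    · intro a ha b hb hab
      simp only [hSo, coe_filter, mem_univ, true_and, Set.mem_setOf_eq] at ha hb
      have := faceNext_inj R (d := a.symm) (d' := b.symm) (by simp [ha, hb]) hab
      exact SimpleGraph.Dart.symm_involutive.injective this
  rw [Finset.sum_add_distrib, h1]
  exact CharTwo.add_self_eq_zero _

noncomputable instance faceFintype : Fintype R.Face :=
  @Fintype.ofFinite _ (inferInstanceAs (Finite (Quot (fun a b : R.G.Dart => R.faceNext a = b))))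

noncomputable def incM : Matrix W R.G.edgeSet (ZMod 2) :=
  fun v e => ∑ d ∈ univ.filter (fun d : R.G.Dart => d.fst = v), if d.edge = e.1 then 1 else 0

theorem incM_mulVec (z : R.G.edgeSet → ZMod 2) (v : W) :
    (incM R).mulVec z v =
      ∑ d ∈ univ.filter (fun d : R.G.Dart => d.fst = v), z ⟨d.edge, d.edge_mem⟩ := by
  simp only [Matrix.mulVec, dotProduct, incM, Finset.sum_mul]
  rw [Finset.sum_comm]
  refine Finset.sum_congr rfl fun d _ => ?_
  rw [Finset.sum_eq_single ⟨d.edge, d.edge_mem⟩]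
  · simp
  · intro b _ hb
    rw [if_neg, zero_mul]
    intro h; exact hb (Subtype.ext h.symm)
  · simp

theorem incM_transpose_mulVec (g : W → ZMod 2) (d : R.G.Dart) :
    (incM R).transpose.mulVec g ⟨d.edge, d.edge_mem⟩ = g d.fst + g d.snd := by
  simp only [Matrix.mulVec, dotProduct, incM, Finset.sum_mul, Matrix.transpose_apply]
  have : ∀ v : W, ∑ i ∈ univ.filter (fun d : R.G.Dart => d.fst = v),
      (if i.edge = d.edge then (1 : ZMod 2) else 0) * g v =
      ∑ i ∈ univ.filter (fun d : R.G.Dart => d.fst = v),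
        (if i.edge = d.edge then g i.fst else 0) := by
    intro v
    refine Finset.sum_congr rfl fun i hi => ?_
    simp only [mem_filter, mem_univ, true_and] at hi
    subst hi
    split_ifs <;> simp
  simp only [this]
  rw [Finset.sum_fiberwise univ (fun i : R.G.Dart => i.fst) (fun i => if i.edge = d.edge then g i.fst else 0), ← Finset.sum_filter, SimpleGraph.Dart.edge_fiber,
    Finset.sum_pair d.symm_ne.symm]
  simp

noncomputable def cob : (R.Face → ZMod 2) →ₗ[ZMod 2] (R.G.edgeSet → ZMod 2) where
  toFun f e := ∑ d ∈ univ.filter (fun d : R.G.Dart => d.edge = e.1), f (Quot.mk _ d)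
  map_add' f g := by
    ext e; exact Finset.sum_add_distrib
  map_smul' c g := by
    ext e; exact (Finset.mul_sum _ _ _).symm

theorem cob_apply (f : R.Face → ZMod 2) (d : R.G.Dart) :
    cob R f ⟨d.edge, d.edge_mem⟩ = f (Quot.mk _ d) + f (Quot.mk _ d.symm) := by
  show ∑ d' ∈ univ.filter (fun d' : R.G.Dart => d'.edge = d.edge), f (Quot.mk _ d') = _
  rw [SimpleGraph.Dart.edge_fiber, Finset.sum_pair d.symm_ne.symm]

theorem face_next (f : R.Face → ZMod 2) (d : R.G.Dart) :
    f (Quot.mk _ (R.faceNext d)) = f (Quot.mk _ d) := by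
  congr 1
  exact (Quot.sound (r := fun a b : R.G.Dart => R.faceNext a = b) rfl).symm

theorem range_cob_le : LinearMap.range (cob R) ≤ LinearMap.ker (incM R).mulVecLin := by
  rintro _ ⟨f, rfl⟩
  rw [LinearMap.mem_ker]
  ext v
  rw [Matrix.mulVecLin_apply, incM_mulVec]
  simp only [cob_apply]
  exact around_zero R (fun d => f (Quot.mk _ d)) (face_next R f) v

/-- A face colouring that does not change across edges is constant around each vertex. -/
theorem const_around (g : R.G.Dart → ZMod 2) (hg : ∀ d, g (R.faceNext d) = g d) (v : W)
    (hs : ∀ d : R.G.Dart, d.fst = v → g d = g d.symm)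
    (d d' : R.G.Dart) (hd : d.fst = v) (hd' : d'.fst = v) : g d = g d' := by
  have hinc : ∀ a : R.G.Dart, a.fst = v → a.edge ∈ incidentSet R.G v := by
    intro a ha; subst ha
    exact ⟨a.edge_mem, by rcases a with ⟨⟨a, b⟩, h⟩; simp [SimpleGraph.Dart.edge]⟩
  have hext : ∀ a b : R.G.Dart, a.fst = v → b.fst = v → a.edge = b.edge → a = b := by
    intro a b ha hb hab
    rcases (SimpleGraph.dart_edge_eq_iff _ _).1 hab with h | h
    · exact h
    · exfalso
      rw [h] at ha
      apply b.fst_ne_snd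
      rw [hb]; exact ha.symm
  have hex : ∀ e ∈ incidentSet R.G v, ∃ a : R.G.Dart, a.fst = v ∧ a.edge = e := by
    rintro e ⟨he, hv⟩
    have h := Sym2.other_spec hv
    rw [← h] at he
    exact ⟨⟨(v, Sym2.Mem.other hv), he⟩, rfl, h⟩
  obtain ⟨m, hm⟩ := (R.rot_cycleOn v).exists_pow_eq' (Set.toFinite _) (hinc d hd) (hinc d' hd')
  have key : ∀ (m : ℕ) (a : R.G.Dart), a.fst = v → a.edge = (R.rot v ^ m) d.edge →
      g d = g a := by
    intro m
    induction m with
    | zero =>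
      intro a ha h
      rw [hext a d ha hd (by simpa using h)]
    | succ m ih =>
      intro a ha h
      have hmem : (R.rot v ^ m) d.edge ∈ incidentSet R.G v :=
        ((R.rot_cycleOn v).1.perm_pow m).mapsTo (hinc d hd)
      obtain ⟨b, hb, hbe⟩ := hex _ hmem
      have hab : a = R.faceNext b.symm := by
        apply hext _ _ ha
        · rw [faceNext_fst]; simpa using hb
        · rw [faceNext_edge, h, pow_succ', Equiv.Perm.mul_apply, ← hbe]
          simp [hb]
      rw [hab, hg, ← hs b hb]
      exact ih b hb hbe
  exact key m d' hd' hm.symm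

noncomputable def isoSet : Set W := {v : W | ∀ w, ¬ R.G.Adj v w}

/-- The dart leaving a non-isolated vertex. -/
theorem exists_dart {v : W} (hv : v ∉ isoSet R) : ∃ d : R.G.Dart, d.fst = v := by
  simp only [isoSet, Set.mem_setOf_eq, not_forall, not_not] at hv
  obtain ⟨w, hw⟩ := hv
  exact ⟨⟨(v, w), hw⟩, rfl⟩

noncomputable def kerMap :
    ((R.Face → ZMod 2) × (isoSet R → ZMod 2)) →ₗ[ZMod 2] (W → ZMod 2) where
  toFun p v := if h : v ∈ isoSet R then p.2 ⟨v, h⟩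
    else p.1 (Quot.mk _ (exists_dart R h).choose)
  map_add' p q := by
    ext v; simp only [Pi.add_apply]; split_ifs <;> rfl
  map_smul' c q := by
    ext v; simp only [Pi.smul_apply]; split_ifs <;> rfl

theorem ker_cob_iff (f : R.Face → ZMod 2) (hf : f ∈ LinearMap.ker (cob R)) (d : R.G.Dart) :
    f (Quot.mk _ d) = f (Quot.mk _ d.symm) := by
  have h := congrFun (LinearMap.mem_ker.1 hf) ⟨d.edge, d.edge_mem⟩
  rw [cob_apply] at h
  exact CharTwo.add_eq_zero.1 h

theorem kerMap_eq (f : R.Face → ZMod 2) (hf : f ∈ LinearMap.ker (cob R))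
    (k : isoSet R → ZMod 2) (d : R.G.Dart) : kerMap R (f, k) d.fst = f (Quot.mk _ d) := by
  have h : d.fst ∉ isoSet R := fun h => h _ d.adj
  show (if h : d.fst ∈ isoSet R then k ⟨_, h⟩
    else f (Quot.mk _ (exists_dart R h).choose)) = _
  rw [dif_neg h]
  exact const_around R (fun d => f (Quot.mk _ d)) (face_next R f) d.fst
    (fun d _ => ker_cob_iff R f hf d) _ _ (exists_dart R h).choose_spec rfl

theorem ker_dim : Module.finrank (ZMod 2) (LinearMap.ker (cob R)) + Nat.card (isoSet R) ≤
    Module.finrank (ZMod 2) (LinearMap.ker (incM R).transpose.mulVecLin) := by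
  have h1 : Module.finrank (ZMod 2) (LinearMap.ker (cob R)) + Nat.card (isoSet R) =
      Module.finrank (ZMod 2) (LinearMap.ker (cob R) × (isoSet R → ZMod 2)) := by
    rw [Module.finrank_prod, Module.finrank_pi, Nat.card_eq_fintype_card]
  rw [h1]
  let φ : (LinearMap.ker (cob R) × (isoSet R → ZMod 2)) →ₗ[ZMod 2] (W → ZMod 2) :=
    kerMap R ∘ₗ ((LinearMap.ker (cob R)).subtype.prodMap LinearMap.id)
  have hφ : ∀ p, φ p ∈ LinearMap.ker (incM R).transpose.mulVecLin := by
    rintro ⟨⟨f, hf⟩, k⟩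
    rw [LinearMap.mem_ker]
    ext ⟨e, he⟩
    induction e using Sym2.ind with
    | _ x y =>
      rw [Matrix.mulVecLin_apply]
      have := incM_transpose_mulVec R (φ (⟨f, hf⟩, k)) ⟨(x, y), he⟩
      refine this.trans ?_
      have ha := kerMap_eq R f hf k ⟨(x, y), he⟩
      have hb := kerMap_eq R f hf k (SimpleGraph.Dart.symm ⟨(x, y), he⟩)
      rw [← ker_cob_iff R f hf] at hb
      show kerMap R (f, k) _ + kerMap R (f, k) _ = 0
      exact (congrArg₂ (· + ·) ha hb).trans (CharTwo.add_self_eq_zero _)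
  let ψ := LinearMap.codRestrict _ φ hφ
  apply LinearMap.finrank_le_finrank_of_injective (f := ψ)
  rw [LinearMap.injective_codRestrict_iff, ← LinearMap.ker_eq_bot, LinearMap.ker_eq_bot']
  rintro ⟨⟨f, hf⟩, k⟩ h
  have h' : kerMap R (f, k) = 0 := h
  have hf0 : f = 0 := by
    ext F
    induction F using Quot.ind with
    | _ d =>
      rw [← kerMap_eq R f hf k d, h']; rfl
  have hk0 : k = 0 := by
    ext ⟨v, hv⟩
    have := congrFun h' v
    change (if h : v ∈ isoSet R then k ⟨_, h⟩
      else f (Quot.mk _ (exists_dart R h).choose)) = 0 at this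
    rwa [dif_pos hv] at this
  subst hf0 hk0
  rfl

theorem comp_dim : Module.finrank (ZMod 2) (LinearMap.ker (incM R).transpose.mulVecLin) ≤
    Nat.card R.G.ConnectedComponent := by
  have : Module.finrank (ZMod 2) (R.G.ConnectedComponent → ZMod 2) =
      Nat.card R.G.ConnectedComponent := by
    rw [Module.finrank_pi, Nat.card_eq_fintype_card]
  rw [← this]
  let φ : (R.G.ConnectedComponent → ZMod 2) →ₗ[ZMod 2] (W → ZMod 2) :=
    LinearMap.funLeft (ZMod 2) (ZMod 2) R.G.connectedComponentMk
  refine le_trans (Submodule.finrank_mono (t := LinearMap.range φ) ?_)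
    (LinearMap.finrank_range_le φ)
  intro g hg
  rw [LinearMap.mem_ker] at hg
  have hadj : ∀ x y, R.G.Adj x y → g x = g y := by
    intro x y h
    have h1 := congrFun hg ⟨s(x, y), h⟩
    rw [Matrix.mulVecLin_apply] at h1
    have := incM_transpose_mulVec R g ⟨(x, y), h⟩
    exact CharTwo.add_eq_zero.1 (this.symm.trans h1)
  have hr : ∀ x y, ∀ p : R.G.Walk x y, g x = g y := by
    intro x y p
    induction p with
    | nil => rfl
    | cons h p ih => exact (hadj _ _ h).trans ih
  refine ⟨fun c => c.lift g (fun x y p _ => hr x y p), ?_⟩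
  ext v
  rfl

theorem dims : Nat.card W + R.numFaces =
      Module.finrank (ZMod 2) (LinearMap.range (cob R)) + Module.finrank (ZMod 2) (LinearMap.ker (cob R))
       + Nat.card W ∧
    Module.finrank (ZMod 2) (LinearMap.ker (incM R).mulVecLin) + Nat.card W =
      Nat.card R.G.edgeSet +
        Module.finrank (ZMod 2) (LinearMap.ker (incM R).transpose.mulVecLin) := by
  constructor
  · have := LinearMap.finrank_range_add_finrank_ker (cob R)
    rw [this, Module.finrank_pi, RotationSystem.numFaces, Nat.card_eq_fintype_card (α := W), add_comm]
    congr 1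
    exact Nat.card_eq_fintype_card (α := R.Face)
  · have h1 := LinearMap.finrank_range_add_finrank_ker (incM R).mulVecLin
    have h2 := LinearMap.finrank_range_add_finrank_ker (incM R).transpose.mulVecLin
    have h3 := Matrix.rank_transpose (incM R)
    unfold Matrix.rank at h3
    rw [Module.finrank_pi] at h1 h2
    rw [Nat.card_eq_fintype_card, Nat.card_eq_fintype_card]
    omega

theorem euler_le : Nat.card W + R.numFaces + Nat.card (isoSet R) ≤
    Nat.card R.G.edgeSet + 2 * Nat.card R.G.ConnectedComponent := by
  have h1 := ker_dim R
  have h2 := comp_dim R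
  obtain ⟨h3, h4⟩ := dims R
  have h5 := Submodule.finrank_mono (range_cob_le R)
  omega

theorem plane_exact (h : R.IsPlane) :
    LinearMap.range (cob R) = LinearMap.ker (incM R).mulVecLin := by
  apply Submodule.eq_of_le_of_finrank_le (range_cob_le R)
  have h1 := ker_dim R
  have h2 := comp_dim R
  obtain ⟨h3, h4⟩ := dims R
  have h5 : Nat.card W + R.numFaces + Nat.card (isoSet R) =
    Nat.card R.G.edgeSet + 2 * Nat.card R.G.ConnectedComponent := h
  omega

/-- Every mod-2 cycle of a plane graph is the boundary of a 2-colouring of its faces. -/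
theorem exists_colouring (h : R.IsPlane) (z : Sym2 W → ZMod 2)
    (hz : ∀ v, ∑ d ∈ univ.filter (fun d : R.G.Dart => d.fst = v), z d.edge = 0) :
    ∃ g : R.G.Dart → ZMod 2, (∀ d, g (R.faceNext d) = g d) ∧
      ∀ d, g d + g d.symm = z d.edge := by
  have hz' : (fun e : R.G.edgeSet => z e.1) ∈ LinearMap.ker (incM R).mulVecLin := by
    rw [LinearMap.mem_ker]
    ext v
    rw [Matrix.mulVecLin_apply, incM_mulVec]
    exact hz v
  rw [← plane_exact R h] at hz'
  obtain ⟨f, hf⟩ := hz'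
  refine ⟨fun d => f (Quot.mk _ d), face_next R f, fun d => ?_⟩
  rw [← cob_apply, hf]

end homology
end FNC
namespace FNC
open WBW Finset

section obstruction
variable {W : Type} [Fintype W] (R : RotationSystem W)
open Classical

set_option linter.unusedSectionVars false
set_option linter.deprecated false

noncomputable def bd (z : Sym2 W → ZMod 2) (v : W) : ZMod 2 :=
  ∑ d ∈ univ.filter (fun d : R.G.Dart => d.fst = v), z d.edge

theorem bd_add (z z' : Sym2 W → ZMod 2) (v : W) : bd R (z + z') v = bd R z v + bd R z' v := by
  simp [bd, Finset.sum_add_distrib]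

theorem bd_single (x y : W) (h : R.G.Adj x y) (v : W) :
    bd R (fun e => if e = s(x, y) then 1 else 0) v =
      (if v = x then 1 else 0) + (if v = y then 1 else 0) := by
  unfold bd
  rw [← Finset.sum_filter, Finset.filter_comm, Finset.sum_filter]
  have := SimpleGraph.Dart.edge_fiber (⟨(x, y), h⟩ : R.G.Dart)
  change univ.filter (fun d : R.G.Dart => d.edge = s(x, y)) = _ at this
  rw [this, Finset.sum_pair (SimpleGraph.Dart.symm_ne _).symm]
  simp [eq_comm]
  congr

def Inv (g : R.G.Dart → ZMod 2) : Prop := ∀ d, g (R.faceNext d) = g d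

theorem exists_edge_chain (e : Sym2 W) (he : e ∈ R.G.edgeSet) (x y : W) (hx : x ∈ e)
    (hy : y ∈ e) : ∃ p : Sym2 W → ZMod 2, (∀ e', e' ≠ e → p e' = 0) ∧
      ∀ v, bd R p v = (if v = x then 1 else 0) + (if v = y then 1 else 0) := by
  by_cases hxy : x = y
  · subst hxy
    refine ⟨0, fun _ _ => rfl, fun v => ?_⟩
    rw [CharTwo.add_self_eq_zero]; simp [bd]
  · have h := (Sym2.mem_and_mem_iff hxy).1 ⟨hx, hy⟩
    subst h
    exact ⟨_, fun e' h => if_neg h, fun v => bd_single R x y he v⟩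

theorem exists_chain (L : List (Sym2 W)) (hL : ∀ e ∈ L, e ∈ R.G.edgeSet)
    (hc : L.IsChain (Attached R)) : ∀ (x y : W) (e f : Sym2 W), L.head? = some e → x ∈ e →
      L.getLast? = some f → y ∈ f →
      ∃ p : Sym2 W → ZMod 2, (∀ e', e' ∉ L → p e' = 0) ∧
      ∀ v, bd R p v = (if v = x then 1 else 0) + (if v = y then 1 else 0) := by
  induction L with
  | nil => intro x y e f h; simp at h
  | cons a L ih =>
    intro x y e f he hx hf hy
    simp only [List.head?_cons, Option.some.injEq] at he
    subst he
    cases L with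
    | nil =>
      simp only [List.getLast?_singleton, Option.some.injEq] at hf
      subst hf
      obtain ⟨p, hp, hb⟩ := exists_edge_chain R a (hL a (by simp)) x y hx hy
      exact ⟨p, fun e' h => hp e' (by simpa using h), hb⟩
    | cons b L =>
      rw [List.isChain_cons_cons] at hc
      obtain ⟨⟨v, hav, hbv, -⟩, hc⟩ := hc
      obtain ⟨p, hp, hb⟩ := exists_edge_chain R a (hL a (by simp)) x v hx hav.2
      obtain ⟨q, hq, hb'⟩ := ih (fun e he => hL e (List.mem_cons_of_mem _ he)) hc v y b f rfl
        hbv.2 (by rw [List.getLast?_cons_cons] at hf; exact hf) hy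
      refine ⟨p + q, fun e' h => ?_, fun w => ?_⟩
      · rw [List.mem_cons, not_or] at h
        simp [hp e' h.1, hq e' h.2]
      · rw [bd_add, hb, hb']
        have : ∀ a b c : ZMod 2, a + b + (b + c) = a + c := by decide
        exact this _ _ _

theorem att_const (g : R.G.Dart → ZMod 2) (hg : Inv R g) (d d' : R.G.Dart)
    (h : Attached R d.edge d'.edge) (h1 : g d = g d.symm) (h2 : g d' = g d'.symm) :
    g d = g d' := by
  have main : ∀ d d' : R.G.Dart, ∀ v, d.edge ∈ incidentSet R.G v → R.rot v d.edge = d'.edge →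
      g d = g d.symm → g d' = g d'.symm → g d = g d' := by
    intro d d' v hd hr h1 h2
    have hval : ∀ a b : R.G.Dart, a.edge = b.edge → g b = g b.symm → g a = g b := by
      intro a b hab hb
      rcases (SimpleGraph.dart_edge_eq_iff _ _).1 hab with h | h
      · rw [h]
      · rw [h, hb]
    have hd2 : ∃ a : R.G.Dart, a.snd = v ∧ a.edge = d.edge := by
      have := hd.2
      rcases d with ⟨⟨a, b⟩, hab⟩
      simp only [SimpleGraph.Dart.edge, Sym2.mem_iff] at this
      rcases this with rfl | rfl
      · exact ⟨⟨(b, v), hab.symm⟩, rfl, Sym2.eq_swap⟩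
      · exact ⟨⟨(a, v), hab⟩, rfl, rfl⟩
    obtain ⟨a, ha, hae⟩ := hd2
    have : (R.faceNext a).edge = d'.edge := by rw [faceNext_edge, ha, hae, hr]
    rw [← hval _ _ hae h1, ← hval _ _ this h2, hg]
  obtain ⟨v, ha, hb, h | h⟩ := h
  · exact main d d' v ha h h1 h2
  · exact (main d' d v hb h h2 h1).symm

theorem exists_dart_of_edge (e : Sym2 W) (he : e ∈ R.G.edgeSet) :
    ∃ d : R.G.Dart, d.edge = e := by
  induction e using Sym2.ind with
  | _ x y => exact ⟨⟨(x, y), he⟩, rfl⟩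

theorem list_const (L : List (Sym2 W)) (hL : ∀ e ∈ L, e ∈ R.G.edgeSet)
    (hc : L.IsChain (Attached R)) (g : R.G.Dart → ZMod 2) (hg : Inv R g)
    (hs : ∀ d : R.G.Dart, d.edge ∈ L → g d = g d.symm) :
    ∀ d d' : R.G.Dart, d.edge ∈ L → d'.edge ∈ L → g d = g d' := by
  suffices h : ∃ c, ∀ d : R.G.Dart, d.edge ∈ L → g d = c by
    obtain ⟨c, hc⟩ := h
    intro d d' h h'
    rw [hc d h, hc d' h']
  induction L with
  | nil => exact ⟨0, by simp⟩
  | cons a L ih =>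
    have hsame : ∀ d d' : R.G.Dart, d.edge = a → d'.edge = a → g d = g d' := by
      intro d d' h h'
      rcases (SimpleGraph.dart_edge_eq_iff _ _).1 (h.trans h'.symm) with e | e
      · rw [e]
      · rw [e, hs d' (by rw [h']; simp)]
    cases L with
    | nil =>
      obtain ⟨d0, h0⟩ := exists_dart_of_edge R a (hL a (by simp))
      exact ⟨g d0, fun d hd => hsame _ _ (by simpa using hd) h0⟩
    | cons b L =>
      rw [List.isChain_cons_cons] at hc
      obtain ⟨c, hcc⟩ := ih (fun e he => hL e (List.mem_cons_of_mem _ he)) hc.2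
        (fun d hd => hs d (List.mem_cons_of_mem _ hd))
      refine ⟨c, fun d hd => ?_⟩
      rcases List.mem_cons.1 hd with h | h
      · obtain ⟨d0, h0⟩ := exists_dart_of_edge R b (hL b (by simp))
        rw [← hcc d0 (by rw [h0]; simp)]
        apply att_const R g hg
        · rw [h, h0]; exact hc.1
        · exact hs _ hd
        · exact hs _ (by rw [h0]; simp)
      · exact hcc d h

structure Link (x y : W) (S : Set (Sym2 W)) : Prop where
  sub : ∀ e ∈ S, e ∈ R.G.edgeSet
  chain : ∃ p : Sym2 W → ZMod 2, (∀ e', e' ∉ S → p e' = 0) ∧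
      ∀ v, bd R p v = (if v = x then 1 else 0) + (if v = y then 1 else 0)
  const : ∀ g : R.G.Dart → ZMod 2, Inv R g →
    (∀ d : R.G.Dart, d.edge ∈ S → g d = g d.symm) →
    ∀ d d' : R.G.Dart, d.edge ∈ S → d'.edge ∈ S → g d = g d'
  left : ∃ e ∈ S, x ∈ e
  right : ∃ e ∈ S, y ∈ e

theorem Link.symm {x y : W} {S : Set (Sym2 W)} (h : Link R x y S) : Link R y x S where
  sub := h.sub
  chain := by
    obtain ⟨p, hp, hb⟩ := h.chain
    exact ⟨p, hp, fun v => by rw [hb, add_comm]⟩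
  const := h.const
  left := h.right
  right := h.left

theorem link_of_walk {x y : W} {L : List (Sym2 W)} (h : IsWbwWalkFromTo R x y L) :
    Link R x y {e | e ∈ L} where
  sub := h.1.2.2.1
  chain := by
    obtain ⟨⟨-, -, hs, hc⟩, ⟨e, he, hx⟩, ⟨f, hf, hy⟩⟩ := h
    exact exists_chain R L hs hc x y e f he hx hf hy
  const := fun g hg hs => list_const R L h.1.2.2.1 h.1.2.2.2 g hg hs
  left := by
    obtain ⟨e, he, hx⟩ := h.2.1
    exact ⟨e, List.mem_of_head? he, hx⟩
  right := by
    obtain ⟨e, he, hx⟩ := h.2.2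
    exact ⟨e, List.mem_of_getLast? he, hx⟩

theorem dart_at (x : W) (e : Sym2 W) (he : e ∈ R.G.edgeSet) (hx : x ∈ e) :
    ∃ d : R.G.Dart, d.fst = x ∧ d.edge = e := by
  have h := Sym2.other_spec hx
  rw [← h] at he
  exact ⟨⟨(x, Sym2.Mem.other hx), he⟩, rfl, h⟩

theorem fst_mem_edge (d : R.G.Dart) : d.fst ∈ d.edge := by
  rcases d with ⟨⟨a, b⟩, h⟩; simp [SimpleGraph.Dart.edge]

/-- A plane graph carries no K33 system of non-interfering links. -/
theorem no_K33 (hR : R.IsPlane) (hub v : Fin 3 → W) (S : Fin 3 → Fin 3 → Set (Sym2 W))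
    (hhv : ∀ k i, hub k ≠ v i)
    (hl : ∀ k i, Link R (hub k) (v i) (S k i))
    (hdis : ∀ k i k' i' e, e ∈ S k i → e ∈ S k' i' → k = k' ∧ i = i')
    (hav1 : ∀ k i k' e, e ∈ S k i → hub k' ∈ e → k' = k)
    (hav2 : ∀ k i i' e, e ∈ S k i → v i' ∈ e → i' = i) : False := by
  choose p hp hbd using fun k i => (hl k i).chain
  let z : Fin 3 → Sym2 W → ZMod 2 := fun i => p 0 i + p 1 i
  have hz0 : ∀ i e, e ∉ S 0 i → e ∉ S 1 i → z i e = 0 := by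
    intro i e h h'
    simp [z, hp 0 i e h, hp 1 i e h']
  have hzbd : ∀ i w, bd R (z i) w =
      (if w = hub 0 then 1 else 0) + (if w = hub 1 then 1 else 0) := by
    intro i w
    rw [bd_add, hbd, hbd]
    have : ∀ a b c : ZMod 2, a + b + (c + b) = a + c := by decide
    exact this _ _ _
  -- a vertex not touched
  have hno : ∀ i (d : R.G.Dart), (∀ e, e ∈ S 0 i ∨ e ∈ S 1 i → d.fst ∉ e) → z i d.edge = 0 := by
    intro i d h
    apply hz0
    · exact fun h' => h _ (Or.inl h') (fst_mem_edge R d)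
    · exact fun h' => h _ (Or.inr h') (fst_mem_edge R d)
  have hub2 : ∀ i (d : R.G.Dart), d.fst = hub 2 → z i d.edge = 0 := by
    intro i d hd
    apply hno
    rw [hd]
    rintro e (h | h) h'
    · exact absurd (hav1 _ _ _ _ h h') (by decide)
    · exact absurd (hav1 _ _ _ _ h h') (by decide)
  have hvk : ∀ i k (d : R.G.Dart), k ≠ i → d.fst = v k → z i d.edge = 0 := by
    intro i k d hk hd
    apply hno
    rw [hd]
    rintro e (h | h) h'
    · exact hk (hav2 _ _ _ _ h h')
    · exact hk (hav2 _ _ _ _ h h')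
  have hS : ∀ i k k' e, k ≠ i → e ∈ S k' k → z i e = 0 := by
    intro i k k' e hk he
    apply hz0
    · exact fun h => hk (hdis _ _ _ _ _ he h).2
    · exact fun h => hk (hdis _ _ _ _ _ he h).2
  -- existence of normalised colourings
  have hex : ∀ i j, ∃ g : R.G.Dart → ZMod 2, Inv R g ∧
      (∀ d, g d + g d.symm = z i d.edge + z j d.edge) ∧ ∀ d, d.fst = hub 2 → g d = 0 := by
    intro i j
    obtain ⟨g, hg, hgz⟩ := exists_colouring R hR (z i + z j) (fun w => by
      have : bd R (z i + z j) w = 0 := by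
        rw [bd_add, hzbd, hzbd]; exact CharTwo.add_self_eq_zero _
      exact this)
    have hc : ∀ d d' : R.G.Dart, d.fst = hub 2 → d'.fst = hub 2 → g d = g d' := by
      intro d d' hd hd'
      refine const_around R g hg (hub 2) (fun a ha => ?_) d d' hd hd'
      have := hgz a
      rw [Pi.add_apply, hub2 i a ha, hub2 j a ha, add_zero] at this
      exact CharTwo.add_eq_zero.1 this
    obtain ⟨e0, he0, hx⟩ := (hl 2 0).left
    obtain ⟨d0, hd0, -⟩ := dart_at R (hub 2) e0 ((hl 2 0).sub _ he0) hx
    refine ⟨fun d => g d + g d0, fun d => ?_, fun d => ?_, fun d hd => ?_⟩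
    · show g _ + _ = g _ + _
      rw [hg]
    · have h2 : ∀ a b c : ZMod 2, a + c + (b + c) = a + b := by decide
      show g d + g d0 + (g d.symm + g d0) = _
      rw [h2, hgz]; rfl
    · show g d + g d0 = 0
      rw [hc d d0 hd hd0]; exact CharTwo.add_self_eq_zero _
  -- vanishing on the third link
  have hvan : ∀ i j k, k ≠ i → k ≠ j → ∀ g : R.G.Dart → ZMod 2, Inv R g →
      (∀ d, g d + g d.symm = z i d.edge + z j d.edge) → (∀ d, d.fst = hub 2 → g d = 0) →
      ∀ d : R.G.Dart, d.edge ∈ S 0 k → g d = 0 := by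
    intro i j k hki hkj g hg hgz hg2 d hd
    have hflat : ∀ k' (a : R.G.Dart), a.edge ∈ S k' k → g a = g a.symm := by
      intro k' a ha
      have := hgz a
      rw [hS i k k' _ hki ha, hS j k k' _ hkj ha, add_zero] at this
      exact CharTwo.add_eq_zero.1 this
    obtain ⟨e1, he1, hx1⟩ := (hl 2 k).left
    obtain ⟨d1, hd1, hde1⟩ := dart_at R _ e1 ((hl 2 k).sub _ he1) hx1
    obtain ⟨e2, he2, hx2⟩ := (hl 2 k).right
    obtain ⟨d2, hd2, hde2⟩ := dart_at R _ e2 ((hl 2 k).sub _ he2) hx2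
    obtain ⟨e3, he3, hx3⟩ := (hl 0 k).right
    obtain ⟨d3, hd3, hde3⟩ := dart_at R _ e3 ((hl 0 k).sub _ he3) hx3
    have h12 : g d1 = g d2 := (hl 2 k).const g hg (hflat 2) d1 d2 (by rwa [hde1]) (by rwa [hde2])
    have h23 : g d2 = g d3 := by
      refine const_around R g hg (v k) (fun a ha => ?_) d2 d3 hd2 hd3
      have := hgz a
      rw [hvk i k a hki ha, hvk j k a hkj ha, add_zero] at this
      exact CharTwo.add_eq_zero.1 this
    have h3 : g d3 = g d := (hl 0 k).const g hg (hflat 0) d3 d (by rwa [hde3]) hd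
    rw [← h3, ← h23, ← h12]
    exact hg2 d1 hd1
  obtain ⟨g1, hg1, hgz1, hn1⟩ := hex 0 1
  obtain ⟨g2, hg2, hgz2, hn2⟩ := hex 0 2
  have hsum := hvan 1 2 0 (by decide) (by decide) (g1 + g2)
    (fun d => by show g1 _ + g2 _ = g1 _ + g2 _; rw [hg1, hg2])
    (fun d => by
      have e1 := hgz1 d
      have e2 := hgz2 d
      have : ∀ a b c d x y w : ZMod 2, a + b = x + y → c + d = x + w → a + c + (b + d) = y + w := by
        decide
      exact this _ _ _ _ _ _ _ e1 e2)
    (fun d hd => by show g1 d + g2 d = 0; rw [hn1 d hd, hn2 d hd, add_zero])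
  have hv2 := hvan 0 1 2 (by decide) (by decide) g1 hg1 hgz1 hn1
  have hv1 := hvan 0 2 1 (by decide) (by decide) g2 hg2 hgz2 hn2
  have hround := around_zero R (fun d => g1 d * g2 d) (fun d => by
    show g1 _ * g2 _ = g1 _ * g2 _
    rw [hg1, hg2]) (hub 0)
  have hS1 : ∀ i (d : R.G.Dart), d.fst = hub 0 → d.edge ∉ S 1 i := by
    intro i d hd h
    have := hav1 1 i 0 _ h (by rw [← hd]; exact fst_mem_edge R d)
    exact absurd this (by decide)
  have hbd0 := hbd 0 0 (hub 0)
  rw [if_pos rfl, if_neg (hhv 0 0), add_zero] at hbd0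
  have : ∑ d ∈ univ.filter (fun d : R.G.Dart => d.fst = hub 0),
      (g1 d * g2 d + g1 d.symm * g2 d.symm) = bd R (p 0 0) (hub 0) := by
    refine Finset.sum_congr rfl fun d hd => ?_
    simp only [mem_filter, mem_univ, true_and] at hd
    have e1 := hgz1 d
    have e2 := hgz2 d
    have hzp : ∀ i, z i d.edge = p 0 i d.edge := by
      intro i
      show p 0 i d.edge + p 1 i d.edge = _
      rw [hp 1 i _ (hS1 i d hd), add_zero]
    rw [hzp, hzp] at e1 e2
    have hpz : ∀ i, d.edge ∉ S 0 i → p 0 i d.edge = 0 := fun i => hp 0 i _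
    have hne : ∀ i j, i ≠ j → d.edge ∈ S 0 i → d.edge ∉ S 0 j :=
      fun i j hij h h' => hij (hdis _ _ _ _ _ h h').2
    have hsy : d.symm.edge = d.edge := by simp
    by_cases h0 : d.edge ∈ S 0 0
    · rw [hpz 1 (hne 0 1 (by decide) h0)] at e1
      have a1 : g1 d + g2 d = 0 := hsum d h0
      have a2 : g1 d.symm + g2 d.symm = 0 := hsum d.symm (by rwa [hsy])
      revert e1 a1 a2
      generalize g1 d = a, g2 d = b, g1 d.symm = a', g2 d.symm = b', p 0 0 d.edge = c
      revert a b a' b' c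
      decide
    · rw [hpz 0 h0]
      by_cases h1 : d.edge ∈ S 0 1
      · rw [hv1 d h1, hv1 d.symm (by rwa [hsy])]; simp
      · by_cases h2 : d.edge ∈ S 0 2
        · rw [hv2 d h2, hv2 d.symm (by rwa [hsy])]; simp
        · rw [hpz 0 h0, hpz 1 h1] at e1
          rw [hpz 0 h0, hpz 2 h2] at e2
          rw [add_zero] at e1 e2
          rw [CharTwo.add_eq_zero.1 e1, CharTwo.add_eq_zero.1 e2]
          exact CharTwo.add_self_eq_zero _
  rw [this, hbd0] at hround
  exact absurd hround (by decide)

end obstruction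
end FNC
namespace FNC
open WBW Finset

section sampling
open Classical
set_option linter.unusedSectionVars false
set_option linter.deprecated false

theorem bad_count {α ι : Type} [Fintype α] [Fintype ι] (T : α → α → Finset α) (D : ℕ)
    (hT : ∀ x y, (T x y).card ≤ D) (a b d : ι) (ha : d ≠ a) (hb : d ≠ b) :
    (univ.filter (fun φ : ι → α => φ d ∈ T (φ a) (φ b))).card ≤
      D * Fintype.card α ^ (Fintype.card ι - 1) := by
  let f : (ι → α) → ({j : ι // j ≠ d} → α) := fun φ j => φ j
  refine le_trans (Finset.card_le_mul_card_image (f := f) _ D ?_) ?_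
  · intro ψ _
    refine le_trans ?_ (hT (ψ ⟨a, ha.symm⟩) (ψ ⟨b, hb.symm⟩))
    refine Finset.card_le_card_of_injOn (fun φ => φ d) ?_ ?_
    · intro φ hφ
      simp only [coe_filter, mem_filter, mem_univ, true_and, Set.mem_setOf_eq] at hφ
      obtain ⟨h1, h2⟩ := hφ
      subst h2
      exact h1
    · intro φ hφ φ' hφ' h
      simp only [coe_filter, mem_filter, mem_univ, true_and, Set.mem_setOf_eq] at hφ hφ'
      ext j
      by_cases hj : j = d
      · subst hj; exact h
      · exact congrFun (hφ.2.trans hφ'.2.symm) ⟨j, hj⟩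
  · refine Nat.mul_le_mul_left _ (le_trans (Finset.card_le_univ _) ?_)
    rw [Fintype.card_fun]
    simp [Fintype.card_subtype_compl]

theorem free_set {α ι : Type} [Fintype α] [Fintype ι] (T : α → α → Finset α) (D : ℕ)
    (hT : ∀ x y, (T x y).card ≤ D) (hι : 0 < Fintype.card ι)
    (hα : Fintype.card ι ^ 3 * D < Fintype.card α) :
    ∃ φ : ι → α, ∀ a b d, d ≠ a → d ≠ b → φ d ∉ T (φ a) (φ b) := by
  by_contra hcon
  push Not at hcon
  let I : Finset (ι × ι × ι) := univ.filter (fun t => t.2.2 ≠ t.1 ∧ t.2.2 ≠ t.2.1)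
  have hsub : (univ : Finset (ι → α)) ⊆
      I.biUnion (fun t => univ.filter (fun φ : ι → α => φ t.2.2 ∈ T (φ t.1) (φ t.2.1))) := by
    intro φ _
    obtain ⟨a, b, d, h1, h2, h3⟩ := hcon φ
    simp only [mem_biUnion, mem_filter, mem_univ, true_and, I]
    exact ⟨(a, b, d), ⟨h1, h2⟩, h3⟩
  have h1 := Finset.card_le_card hsub
  have h2 := h1.trans (Finset.card_biUnion_le_card_mul _ _
    (D * Fintype.card α ^ (Fintype.card ι - 1)) (fun t ht => by
      simp only [mem_filter, mem_univ, true_and, I] at ht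
      exact bad_count T D hT _ _ _ ht.1 ht.2))
  have hI : I.card ≤ Fintype.card ι ^ 3 := by
    refine le_trans (Finset.card_le_univ _) ?_
    simp [pow_succ, mul_assoc]
  rw [Finset.card_univ, Fintype.card_fun] at h2
  have h3 : Fintype.card α ^ Fintype.card ι =
      Fintype.card α * Fintype.card α ^ (Fintype.card ι - 1) := by
    rw [← pow_succ']; congr 1; omega
  have hpos : 0 < Fintype.card α ^ (Fintype.card ι - 1) := by
    apply pow_pos; omega
  rw [h3] at h2
  have h4 : #I * (D * Fintype.card α ^ (Fintype.card ι - 1)) ≤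
      (Fintype.card ι ^ 3 * D) * Fintype.card α ^ (Fintype.card ι - 1) := by
    rw [mul_assoc]; exact Nat.mul_le_mul_right _ hI
  exact absurd (lt_of_lt_of_le (Nat.mul_lt_mul_of_pos_right hα hpos) (h2.trans h4)) (lt_irrefl _)

variable {W : Type} [Fintype W] (R : RotationSystem W)

noncomputable def nbE (e : Sym2 W) : Finset (Sym2 W) :=
  e.toFinset.biUnion (fun v => {R.rot v e, (R.rot v).symm e})

theorem sym2_card_le (e : Sym2 W) : e.toFinset.card ≤ 2 := by
  rw [Sym2.card_toFinset]; split_ifs <;> omega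

theorem nbE_card (e : Sym2 W) : (nbE R e).card ≤ 4 :=
  (Finset.card_biUnion_le_card_mul _ _ 2 (fun _ _ => Finset.card_le_two)).trans
    (by have := sym2_card_le e; omega)

theorem mem_nbE {e f : Sym2 W} (h : Attached R e f) : f ∈ nbE R e := by
  obtain ⟨v, he, hf, h | h⟩ := h
  · simp only [nbE, mem_biUnion, Sym2.mem_toFinset]
    exact ⟨v, he.2, by simp [h]⟩
  · simp only [nbE, mem_biUnion, Sym2.mem_toFinset]
    exact ⟨v, he.2, by simp [← h]⟩

noncomputable def stp (s : Finset (Sym2 W)) : Finset (Sym2 W) := s ∪ s.biUnion (nbE R)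

theorem stp_card (s : Finset (Sym2 W)) : (stp R s).card ≤ 5 * s.card := by
  have h1 := Finset.card_union_le s (s.biUnion (nbE R))
  have h2 := Finset.card_biUnion_le_card_mul s (nbE R) 4 (fun e _ => nbE_card R e)
  unfold stp; omega

theorem stp_mono : Monotone (stp R) := by
  intro s t h
  exact Finset.union_subset_union h (Finset.biUnion_subset_biUnion_of_subset_left _ h)

theorem le_stp (s : Finset (Sym2 W)) : s ≤ stp R s := Finset.subset_union_left

theorem ball_card (k : ℕ) (s : Finset (Sym2 W)) : ((stp R)^[k] s).card ≤ 5 ^ k * s.card := by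
  induction k with
  | zero => simp
  | succ k ih =>
    rw [Function.iterate_succ_apply']
    have := stp_card R ((stp R)^[k] s)
    rw [pow_succ]; nlinarith

theorem ball_mono {k m : ℕ} (h : k ≤ m) (s : Finset (Sym2 W)) :
    (stp R)^[k] s ⊆ (stp R)^[m] s :=
  Function.monotone_iterate_of_id_le (le_stp R) h s

theorem attached_symm {e f : Sym2 W} (h : Attached R e f) : Attached R f e := by
  obtain ⟨v, he, hf, h⟩ := h
  exact ⟨v, hf, he, h.symm⟩

theorem chain_ball (L : List (Sym2 W)) (hc : L.IsChain (Attached R)) :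
    ∀ e ∈ L, ∀ f ∈ L, f ∈ (stp R)^[L.length] {e} := by
  induction L with
  | nil => simp
  | cons a L ih =>
    have hself : ∀ (k : ℕ) (e : Sym2 W), e ∈ (stp R)^[k] {e} := fun k e =>
      ball_mono R (Nat.zero_le k) {e} (by simp)
    cases L with
    | nil =>
      intro e he f hf
      simp only [List.mem_singleton] at he hf
      subst he hf
      exact hself _ _
    | cons b L =>
      rw [List.isChain_cons_cons] at hc
      have ih := ih hc.2
      intro e he f hf
      rcases List.mem_cons.1 he with rfl | he' <;> rcases List.mem_cons.1 hf with rfl | hf'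
      · exact hself _ _
      · have h1 := ih b (by simp) f hf'
        rw [List.length_cons, Function.iterate_succ_apply]
        refine (stp_mono R).iterate _ ?_ h1
        intro x hx
        rw [Finset.mem_singleton] at hx
        subst hx
        exact Finset.mem_union_right _ (by simpa using mem_nbE R hc.1)
      · have h1 := ih e he' b (by simp)
        rw [List.length_cons, Function.iterate_succ_apply']
        refine Finset.mem_union_right _ (Finset.mem_biUnion.2 ⟨b, h1, ?_⟩)
        exact mem_nbE R (attached_symm R hc.1)
      · exact ball_mono R (by simp) _ (ih e he' f hf')

/-- Adjacency in the power yields a short link. -/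
theorem power_link {l : ℕ} (hl : 1 ≤ l) {x y : W} (h : (R.power l).Adj x y) :
    ∃ L : List (Sym2 W), L.length ≤ l ∧ L.IsChain (Attached R) ∧ Link R x y {e | e ∈ L} := by
  have hdist : ∀ x y, wbwDist R x y ≤ (l : ℕ∞) →
      ∃ L : List (Sym2 W), L.length ≤ l ∧ L.IsChain (Attached R) ∧ Link R x y {e | e ∈ L} := by
    intro x y h
    unfold wbwDist at h
    have hne : {n : ℕ∞ | ∃ L, IsWbwWalkFromTo R x y L ∧ (L.length : ℕ∞) = n}.Nonempty := by
      by_contra hcon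
      rw [Set.not_nonempty_iff_eq_empty] at hcon
      rw [hcon, sInf_empty] at h
      exact absurd h (by simp)
    obtain ⟨L, hL, hlen⟩ := csInf_mem hne
    rw [← hlen] at h
    exact ⟨L, by exact_mod_cast h, hL.1.2.2.2, link_of_walk R hL⟩
  unfold RotationSystem.power at h
  rw [SimpleGraph.sup_adj, SimpleGraph.fromRel_adj] at h
  rcases h with h | ⟨-, h | h⟩
  · refine ⟨[s(x, y)], by simpa using hl, by simp, link_of_walk R ⟨⟨by simp, by simp, ?_, ?_⟩, ?_⟩⟩
    · intro e he
      rw [List.mem_singleton] at he; subst he; exact h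
    · exact List.isChain_singleton _
    · exact ⟨⟨_, rfl, by simp⟩, ⟨_, rfl, by simp⟩⟩
  · exact hdist x y h
  · obtain ⟨L, h1, h2, h3⟩ := hdist y x h
    exact ⟨L, h1, h2, h3.symm⟩

theorem not_flat_aux {l n : ℕ} (hl : 1 ≤ l) (hn : 216 * (1 + 2 * (5 ^ l * l)) < n)
    (hR : R.IsPlane) (τ : Fin n → W) (hτ : Function.Injective τ)
    (hadj : ∀ x y, x ≠ y → (R.power l).Adj (τ x) (τ y)) : False := by
  have hex : ∀ x y : Fin n, ∃ L : List (Sym2 W), L.length ≤ l ∧ L.IsChain (Attached R) ∧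
      (x ≠ y → Link R (τ x) (τ y) {e | e ∈ L}) := by
    intro x y
    by_cases h : x = y
    · exact ⟨[], by simp, by simp, fun h' => absurd h h'⟩
    · obtain ⟨L, h1, h2, h3⟩ := power_link R hl (hadj x y h)
      exact ⟨L, h1, h2, fun _ => h3⟩
  choose L hlen hch hlink using hex
  let TW : Fin n → Fin n → Finset W := fun x y =>
    ((stp R)^[l] (L x y).toFinset).biUnion Sym2.toFinset
  have hTW : ∀ x y, (TW x y).card ≤ 2 * (5 ^ l * l) := by
    intro x y
    refine (Finset.card_biUnion_le_card_mul _ _ 2 (fun e _ => sym2_card_le e)).trans ?_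
    rw [mul_comm]
    refine Nat.mul_le_mul_left _ ((ball_card R l _).trans (Nat.mul_le_mul_left _ ?_))
    exact (List.toFinset_card_le _).trans (hlen x y)
  let T : Fin n → Fin n → Finset (Fin n) := fun x y =>
    {x} ∪ univ.filter (fun z => τ z ∈ TW x y)
  have hT : ∀ x y, (T x y).card ≤ 1 + 2 * (5 ^ l * l) := by
    intro x y
    refine (Finset.card_union_le _ _).trans ?_
    rw [Finset.card_singleton]
    refine Nat.add_le_add_left (le_trans ?_ (hTW x y)) _
    refine Finset.card_le_card_of_injOn τ ?_ hτ.injOn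
    intro z hz
    simpa using hz
  obtain ⟨φ, hφ⟩ := free_set (ι := Fin 3 ⊕ Fin 3) T _ hT (by simp) (by simpa using hn)
  have hinj : ∀ a b, a ≠ b → φ a ≠ φ b := by
    intro a b h he
    exact hφ b b a h h (by simp [T, he])
  -- key avoidance fact
  have key : ∀ a b d e f, d ≠ a → d ≠ b → e ∈ L (φ a) (φ b) →
      f ∈ (stp R)^[l] {e} → τ (φ d) ∈ f → False := by
    intro a b d e f h1 h2 he hf hd
    apply hφ a b d h1 h2
    refine Finset.mem_union_right _ ?_
    simp only [mem_filter, mem_univ, true_and, TW, mem_biUnion, Sym2.mem_toFinset]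
    refine ⟨f, (stp_mono R).iterate _ ?_ hf, hd⟩
    intro x hx
    rw [Finset.mem_singleton] at hx
    subst hx
    simpa using he
  have hself : ∀ e : Sym2 W, e ∈ (stp R)^[l] {e} := fun e =>
    ball_mono R (Nat.zero_le l) {e} (by simp)
  have hball : ∀ a b e f, e ∈ L a b → f ∈ L a b → f ∈ (stp R)^[l] {e} := fun a b e f he hf =>
    ball_mono R (hlen a b) _ (chain_ball R _ (hch a b) e he f hf)
  have hlr : ∀ k i, (Sum.inl k : Fin 3 ⊕ Fin 3) ≠ Sum.inr i := by simp
  refine no_K33 R hR (fun k => τ (φ (Sum.inl k))) (fun i => τ (φ (Sum.inr i)))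
    (fun k i => {e | e ∈ L (φ (Sum.inl k)) (φ (Sum.inr i))}) ?_ ?_ ?_ ?_ ?_
  · intro k i h
    exact hinj _ _ (hlr k i) (hτ h)
  · intro k i
    exact hlink _ _ (hinj _ _ (hlr k i))
  · intro k i k' i' e he he'
    have hlk := hlink _ _ (hinj _ _ (hlr k' i'))
    constructor
    · by_contra hk
      obtain ⟨f, hf, hm⟩ := hlk.left
      exact key (Sum.inl k) (Sum.inr i) (Sum.inl k') e f (by simpa using Ne.symm hk) (by simp) he
        (hball _ _ _ _ he' hf) hm
    · by_contra hk
      obtain ⟨f, hf, hm⟩ := hlk.right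
      exact key (Sum.inl k) (Sum.inr i) (Sum.inr i') e f (by simp) (by simpa using Ne.symm hk) he
        (hball _ _ _ _ he' hf) hm
  · intro k i k' e he hm
    by_contra hk
    exact key (Sum.inl k) (Sum.inr i) (Sum.inl k') e e (by simpa using hk) (by simp) he
      (hself e) hm
  · intro k i i' e he hm
    by_contra hk
    exact key (Sum.inl k) (Sum.inr i) (Sum.inr i') e e (by simp) (by simpa using hk) he
      (hself e) hm

end sampling

theorem not_flat {l n : ℕ} (hl : 1 ≤ l) (hn : 216 * (1 + 2 * (5 ^ l * l)) < n) :
    ¬ IsFlat l (⊤ : SimpleGraph (Fin n)) := by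
  rintro ⟨W, hW, R, τ, hR, hτ, hadj⟩
  let := Fintype.ofFinite W
  exact not_flat_aux R hl hn hR τ hτ (fun x y h => hadj x y h)

end FNC
namespace FNC

open WBW Finset

section Build
open Classical

variable {V : Type}

/-- Admissible neighbour lists: duplicate-free, symmetric, loopless. -/
structure NbOK (nb : V → List V) : Prop where
  nodup : ∀ v, (nb v).Nodup
  symm : ∀ u v, v ∈ nb u → u ∈ nb v
  irr : ∀ v, v ∉ nb v

/-- The graph given by neighbour lists. -/
def nbGraph {nb : V → List V} (h : NbOK nb) : SimpleGraph V where
  Adj u v := v ∈ nb u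
  symm := ⟨fun u v => h.symm u v⟩
  loopless := ⟨fun v => h.irr v⟩

theorem nbEdges_nodup {nb : V → List V} (h : NbOK nb) (v : V) :
    ((nb v).map (fun u => s(v, u))).Nodup := by
  refine (h.nodup v).map ?_
  intro a b hab
  exact Sym2.congr_right.1 hab

theorem mem_nbEdges {nb : V → List V} (h : NbOK nb) (v : V) (e : Sym2 V) :
    e ∈ (nb v).map (fun u => s(v, u)) ↔ e ∈ incidentSet (nbGraph h) v := by
  rw [List.mem_map]
  constructor
  · rintro ⟨u, hu, rfl⟩
    exact ⟨hu, by simp⟩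
  · rintro ⟨h1, h2⟩
    obtain ⟨u, rfl⟩ := h2
    exact ⟨u, h1, rfl⟩

/-- The rotation system given by cyclic neighbour lists. -/
noncomputable def nbRot {nb : V → List V} (h : NbOK nb) : RotationSystem V where
  G := nbGraph h
  rot v := ((nb v).map (fun u => s(v, u))).formPerm
  rot_cycleOn v := by
    have := (nbEdges_nodup h v).isCycleOn_formPerm
    convert this using 1
    ext e
    exact (mem_nbEdges h v e).symm
  rot_fixed v e he := by
    apply List.formPerm_apply_of_notMem
    rwa [mem_nbEdges h]

theorem nbRot_get {nb : V → List V} (h : NbOK nb) (v : V) (i : ℕ) (hi : i < (nb v).length) :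
    (nbRot h).rot v s(v, (nb v)[i]) =
      s(v, (nb v)[(i + 1) % (nb v).length]'(Nat.mod_lt _ (by omega))) := by
  have := List.formPerm_apply_getElem _ (nbEdges_nodup h v) i (by simpa using hi)
  simpa [nbRot] using this

theorem nbRot_lab [Fintype V] {nb : V → List V} (h : NbOK nb) {Lab : Type} (lab : V → V → Lab)
    (hlab : ∀ v i (hi : i < (nb v).length),
      lab (nb v)[i] v = lab v ((nb v)[(i + 1) % (nb v).length]'(Nat.mod_lt _ (by omega))))
    (d : (nbRot h).G.Dart) :
    lab ((nbRot h).faceNext d).fst ((nbRot h).faceNext d).snd = lab d.fst d.snd := by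
  have h1 := faceNext_fst (nbRot h) d
  have h2 := faceNext_edge (nbRot h) d
  generalize (nbRot h).faceNext d = d' at *
  obtain ⟨⟨u, v⟩, huv⟩ := d
  obtain ⟨⟨u', w⟩, huw⟩ := d'
  simp only at h1
  subst h1
  have huv' : u ∈ nb u' := h.symm _ _ huv
  obtain ⟨i, hi, rfl⟩ := List.getElem_of_mem huv'
  simp only [SimpleGraph.Dart.edge, Sym2.eq_swap (a := (nb u')[i])] at h2
  simp only [Sym2.mk] at h2
  have h3 := nbRot_get h u' i hi
  have h4 : s(u', w) = s(u', (nb u')[(i + 1) % (nb u').length]'(Nat.mod_lt _ (by omega))) := by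
    rw [← h3]
    exact h2
  have h5 : w = (nb u')[(i + 1) % (nb u').length]'(Nat.mod_lt _ (by omega)) := by
    exact Sym2.congr_right.1 h4
  show lab u' w = lab (nb u')[i] u'
  rw [hlab u' i hi, ← h5]

theorem nbRot_faces [Fintype V] {nb : V → List V} (h : NbOK nb) {Lab : Type} (lab : V → V → Lab)
    (hlab : ∀ v i (hi : i < (nb v).length),
      lab (nb v)[i] v = lab v ((nb v)[(i + 1) % (nb v).length]'(Nat.mod_lt _ (by omega))))
    (S : Finset Lab) (hS : ∀ x ∈ S, ∃ u v, v ∈ nb u ∧ lab u v = x) :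
    S.card ≤ (nbRot h).numFaces := by
  let F : Quot (fun a b : (nbRot h).G.Dart => (nbRot h).faceNext a = b) → Lab :=
    Quot.lift (fun d => lab d.fst d.snd) (by
      intro a b hab
      subst hab
      exact (nbRot_lab h lab hlab a).symm)
  have : Finite (nbRot h).G.Dart := inferInstance
  have : Finite (Quot (fun a b : (nbRot h).G.Dart => (nbRot h).faceNext a = b)) := Quot.finite _
  have : ((S : Set Lab)) ⊆ Set.range F := by
    intro x hx
    obtain ⟨u, v, huv, rfl⟩ := hS x hx
    exact ⟨Quot.mk _ ⟨(u, v), huv⟩, rfl⟩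
  have h1 := Set.ncard_le_ncard this (Set.finite_range F)
  rw [Set.ncard_coe_finset] at h1
  refine h1.trans ?_
  unfold RotationSystem.numFaces
  rw [← Set.image_univ, ← Set.ncard_univ]
  exact Set.ncard_image_le Set.finite_univ

theorem nbRot_edges [Fintype V] {nb : V → List V} (h : NbOK nb) :
    ∑ v, (nb v).length = 2 * Nat.card (nbRot h).G.edgeSet := by
  rw [Nat.card_eq_fintype_card, ← SimpleGraph.edgeFinset_card,
    ← SimpleGraph.sum_degrees_eq_twice_card_edges]
  refine Finset.sum_congr rfl fun v _ => ?_
  rw [← List.toFinset_card_of_nodup (h.nodup v), ← SimpleGraph.card_neighborFinset_eq_degree]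
  congr 1
  ext u
  simp only [List.mem_toFinset, SimpleGraph.mem_neighborFinset]
  rfl

theorem power_of_rot (R : RotationSystem V) {l : ℕ} (hl : 2 ≤ l) {v u w : V} (hu : R.G.Adj v u)
    (hw : R.G.Adj v w) (huw : u ≠ w) (hr : R.rot v s(v, u) = s(v, w)) :
    (R.power l).Adj u w := by
  unfold RotationSystem.power
  rw [SimpleGraph.sup_adj, SimpleGraph.fromRel_adj]
  refine Or.inr ⟨huw, Or.inl ?_⟩
  unfold wbwDist
  refine le_trans (sInf_le ⟨[s(v, u), s(v, w)], ⟨⟨by simp, ?_, ?_, ?_⟩, ?_, ?_⟩, rfl⟩) ?_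
  · simp only [List.nodup_cons, List.mem_singleton, List.not_mem_nil, not_false_eq_true,
      List.nodup_nil, and_true, Sym2.congr_right]
    exact huw
  · intro e he
    simp only [List.mem_cons, List.not_mem_nil, or_false] at he
    rcases he with rfl | rfl
    · exact hu
    · exact hw
  · refine List.isChain_pair.2 ⟨v, ⟨hu, by simp⟩, ⟨hw, by simp⟩, Or.inl hr⟩
  · exact ⟨_, rfl, by simp⟩
  · exact ⟨_, rfl, by simp⟩
  · exact_mod_cast hl

theorem plane_of_le [Fintype V] (R : RotationSystem V) (hc : R.G.Connected)
    (h : Nat.card R.G.edgeSet + 2 ≤ Nat.card V + R.numFaces) : R.IsPlane := by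
  have h1 := euler_le R
  have h2 : Nat.card R.G.ConnectedComponent = 1 := by
    rw [Nat.card_eq_one_iff_unique]
    exact ⟨hc.preconnected.subsingleton_connectedComponent,
      ⟨R.G.connectedComponentMk hc.nonempty.some⟩⟩
  unfold RotationSystem.IsPlane
  unfold isoSet at h1
  omega

end Build

end FNC
namespace FNC

open WBW Finset

section Grid
set_option linter.unusedSectionVars false
open Classical

/-- circumference (and number of columns) of the cylinder -/
abbrev KK (n : ℕ) : ℕ := 2 * n * n

variable {n : ℕ} [hn : Fact (2 ≤ n)]

instance instNeK : NeZero (KK n) := ⟨by have := hn.1; unfold KK; positivity⟩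

theorem KK_ge : 8 ≤ KK n := by
  have := hn.1
  unfold KK
  nlinarith

instance instFactK : Fact (1 < KK n) := ⟨by have := KK_ge (n := n); omega⟩

/-- vertices: cylinder grid and hubs -/
abbrev WW (n : ℕ) : Type := (Fin (KK n) × ZMod (KK n)) ⊕ Fin n

/-- the block (hub index) of a row -/
def blk (y : ZMod (KK n)) : Fin n :=
  ⟨y.val / (2 * n), by
    rw [Nat.div_lt_iff_lt_mul (by have := hn.1; omega)]
    have := ZMod.val_lt y
    unfold KK at this
    nlinarith⟩

/-- row number `i` in the block of hub `a` -/
def row (a : Fin n) (i : ℕ) : ZMod (KK n) := ((a.val * (2 * n) + i : ℕ) : ZMod (KK n))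

theorem row_lt (a : Fin n) {i : ℕ} (hi : i < 2 * n) : a.val * (2 * n) + i < KK n := by
  have := a.2
  unfold KK
  nlinarith

theorem row_val (a : Fin n) {i : ℕ} (hi : i < 2 * n) :
    (row a i).val = a.val * (2 * n) + i := by
  unfold row
  rw [ZMod.val_natCast, Nat.mod_eq_of_lt (row_lt a hi)]

theorem blk_row (a : Fin n) {i : ℕ} (hi : i < 2 * n) : blk (row a i) = a := by
  ext
  unfold blk
  simp only
  rw [row_val a hi, Nat.add_comm, Nat.add_mul_div_right _ _ (by omega), Nat.div_eq_of_lt hi]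
  omega

theorem row_blk (y : ZMod (KK n)) : row (blk y) (y.val % (2 * n)) = y := by
  unfold row blk
  simp only
  rw [Nat.div_add_mod', ZMod.natCast_zmod_val]

theorem row_mod (a : Fin n) {i : ℕ} (hi : i < 2 * n) : (row a i).val % (2 * n) = i := by
  rw [row_val a hi, Nat.mul_add_mod', Nat.mod_eq_of_lt hi]

/-- cyclic neighbour lists -/
def nb : WW n → List (WW n)
  | Sum.inl (t, y) =>
      (if h : t.val + 1 < KK n then [Sum.inl (⟨t.val + 1, h⟩, y)] else []) ++
      [Sum.inl (t, y + 1),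
       (if t.val = 0 then Sum.inr (blk y) else Sum.inl (⟨t.val - 1, by omega⟩, y)),
       Sum.inl (t, y - 1)]
  | Sum.inr a => (List.range (2 * n)).map (fun i => Sum.inl (⟨0, by have := KK_ge (n := n); omega⟩, row a i))

theorem one_ne : (1 : ZMod (KK n)) ≠ 0 := one_ne_zero

theorem two_ne : (2 : ZMod (KK n)) ≠ 0 := by
  intro h
  have h2 : ((2 : ℕ) : ZMod (KK n)) = 0 := by exact_mod_cast h
  rw [ZMod.natCast_eq_zero_iff] at h2
  have := Nat.le_of_dvd (by norm_num) h2
  have := KK_ge (n := n)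
  omega

theorem add_ne_sub (y : ZMod (KK n)) : y + 1 ≠ y - 1 := by
  intro h
  apply two_ne (n := n)
  linear_combination h

theorem mem_nb_ll (t t' : Fin (KK n)) (y y' : ZMod (KK n)) :
    (Sum.inl (t', y') : WW n) ∈ nb (Sum.inl (t, y)) ↔
      (t'.val = t.val + 1 ∧ y' = y) ∨ (t' = t ∧ y' = y + 1) ∨ (t.val = t'.val + 1 ∧ y' = y) ∨
        (t' = t ∧ y' = y - 1) := by
  obtain ⟨t, ht⟩ := t
  obtain ⟨t', ht'⟩ := t'
  unfold nb
  by_cases h : t + 1 < KK n <;> by_cases h0 : t = 0 <;>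
    simp only [h, h0, dite_true, dite_false, if_true, if_false, List.mem_append, List.mem_cons,
      List.not_mem_nil, or_false, false_or, Sum.inl.injEq, Prod.mk.injEq, reduceCtorEq,
      Fin.mk.injEq] <;> grind

theorem mem_nb_lr (t : Fin (KK n)) (y : ZMod (KK n)) (a : Fin n) :
    (Sum.inr a : WW n) ∈ nb (Sum.inl (t, y)) ↔ t.val = 0 ∧ blk y = a := by
  unfold nb
  by_cases h : t.val + 1 < KK n <;> by_cases h0 : t.val = 0 <;>
    simp [h, h0] <;> grind

theorem mem_nb_rl (t : Fin (KK n)) (y : ZMod (KK n)) (a : Fin n) :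
    (Sum.inl (t, y) : WW n) ∈ nb (Sum.inr a) ↔ t.val = 0 ∧ blk y = a := by
  unfold nb
  rw [List.mem_map]
  constructor
  · rintro ⟨i, hi, h⟩
    rw [List.mem_range] at hi
    simp only [Sum.inl.injEq, Prod.mk.injEq] at h
    obtain ⟨rfl, rfl⟩ := h
    exact ⟨rfl, blk_row a hi⟩
  · rintro ⟨h1, rfl⟩
    refine ⟨y.val % (2 * n), ?_, ?_⟩
    · rw [List.mem_range]
      exact Nat.mod_lt _ (by have := hn.1; omega)
    · rw [row_blk]
      simp [Fin.ext_iff, h1]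

theorem mem_nb_rr (a b : Fin n) : (Sum.inr b : WW n) ∉ nb (Sum.inr a) := by
  unfold nb
  simp

theorem nb_ok : NbOK (nb (n := n)) where
  nodup v := by
    rcases v with ⟨t, y⟩ | a
    · unfold nb
      have h1 := add_ne_sub y
      have h2 : y + 1 ≠ y := by simp
      have h3 : y - 1 ≠ y := by simp
      by_cases h : t.val + 1 < KK n <;> by_cases h0 : t.val = 0 <;>
        simp [h, h0, Fin.ext_iff] <;> grind
    · unfold nb
      refine List.Nodup.map_on ?_ List.nodup_range
      intro i hi j hj hij
      rw [List.mem_range] at hi hj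
      simp only [Sum.inl.injEq, Prod.mk.injEq, true_and] at hij
      rw [← row_mod a hi, hij, row_mod a hj]
  symm u v h := by
    rcases u with ⟨t, y⟩ | a <;> rcases v with ⟨t', y'⟩ | b
    · rw [mem_nb_ll] at h ⊢
      rcases h with h | h | h | h
      · exact Or.inr (Or.inr (Or.inl ⟨h.1, h.2.symm⟩))
      · exact Or.inr (Or.inr (Or.inr ⟨h.1.symm, by rw [h.2]; ring⟩))
      · exact Or.inl ⟨h.1, h.2.symm⟩
      · exact Or.inr (Or.inl ⟨h.1.symm, by rw [h.2]; ring⟩)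
    · rw [mem_nb_lr] at h
      rwa [mem_nb_rl]
    · rw [mem_nb_rl] at h
      rwa [mem_nb_lr]
    · exact absurd h (mem_nb_rr _ _)
  irr v h := by
    rcases v with ⟨t, y⟩ | a
    · rw [mem_nb_ll] at h
      have h2 : y ≠ y + 1 := by simp
      have h3 : y ≠ y - 1 := by simp [eq_sub_iff_add_eq]
      rcases h with h | h | h | h
      · omega
      · exact h2 h.2
      · omega
      · exact h3 h.2
    · exact absurd h (mem_nb_rr _ _)

/-- the rotation system -/
noncomputable def RR (n : ℕ) [Fact (2 ≤ n)] : RotationSystem (WW n) := nbRot (nb_ok (n := n))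

theorem RR_adj (u v : WW n) : (RR n).G.Adj u v ↔ v ∈ nb u := Iff.rfl

/-- face labels -/
abbrev Lab (n : ℕ) : Type := Option (Option (Fin (KK n) × ZMod (KK n)))

/-- the label of the face above row `y` and left of column `i` -/
noncomputable def sq (i : ℕ) (y : ZMod (KK n)) : Lab n :=
  if h : i < KK n then
    if i = 0 ∧ y.val % (2 * n) = 2 * n - 1 then some none else some (some (⟨i, h⟩, y))
  else none

/-- face to the right of a dart -/
noncomputable def lab : WW n → WW n → Lab n
  | Sum.inl (t, y), Sum.inl (t', y') =>
      if t'.val = t.val + 1 then sq t'.val (y - 1) else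
      if t.val = t'.val + 1 then sq t.val y else
      if y' = y + 1 then sq (t.val + 1) y else sq t.val y'
  | Sum.inl (_, y), Sum.inr _ => sq 0 y
  | Sum.inr _, Sum.inl (_, y) => sq 0 (y - 1)
  | Sum.inr _, Sum.inr _ => none

theorem row_succ (a : Fin n) (i : ℕ) : row a (i + 1) - 1 = row a i := by
  unfold row
  push_cast
  ring

theorem row_zero_end (a : Fin n) : (row a 0 - 1).val % (2 * n) = 2 * n - 1 := by
  have hn := hn.1
  have h2 : KK n = (n - 1) * (2 * n) + 2 * n := by
    unfold KK
    obtain ⟨m, rfl⟩ : ∃ m, n = m + 1 := ⟨n - 1, by omega⟩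
    simp only [Nat.add_sub_cancel]
    ring
  by_cases ha : a.val = 0
  · have h1 : row a 0 - 1 = row ⟨n - 1, by omega⟩ (2 * n - 1) := by
      have h3 : ((KK n : ℕ) : ZMod (KK n)) = 0 := ZMod.natCast_self _
      have h4 : (row ⟨n - 1, by omega⟩ (2 * n - 1) : ZMod (KK n)) + 1 = ((KK n : ℕ) : ZMod (KK n)) := by
        unfold row
        rw [show (KK n : ℕ) = (n - 1) * (2 * n) + (2 * n - 1) + 1 by omega]
        push_cast
        ring
      have h5 : row a 0 = 0 := by unfold row; simp [ha]
      rw [h5]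
      linear_combination - h3 - h4
    rw [h1, row_mod _ (by omega)]
  · have h1 : row a 0 - 1 = row ⟨a.val - 1, by omega⟩ (2 * n - 1) := by
      unfold row
      obtain ⟨m, hm⟩ : ∃ m, a.val = m + 1 := ⟨a.val - 1, by omega⟩
      simp only [hm, Nat.add_sub_cancel]
      rw [show (m + 1) * (2 * n) + 0 = m * (2 * n) + (2 * n - 1) + 1 by
        rw [add_mul]; omega]
      push_cast
      ring
    rw [h1, row_mod _ (by omega)]

end Grid

end FNC
namespace FNC

open WBW Finset

section Plane
open Classical
set_option linter.unusedSectionVars false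

variable {n : ℕ} [hn : Fact (2 ≤ n)]

theorem sq_last (i : ℕ) (hi : ¬ i < KK n) (y : ZMod (KK n)) : sq i y = none := by
  unfold sq
  rw [dif_neg hi]

theorem lab_E (t t' : Fin (KK n)) (y : ZMod (KK n)) (h : t'.val = t.val + 1) :
    lab (Sum.inl (t, y)) (Sum.inl (t', y)) = sq t'.val (y - 1) := by
  unfold lab
  dsimp only
  rw [if_pos h]

theorem lab_W (t t' : Fin (KK n)) (y : ZMod (KK n)) (h : t.val = t'.val + 1) :
    lab (Sum.inl (t, y)) (Sum.inl (t', y)) = sq t.val y := by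
  unfold lab
  dsimp only
  rw [if_neg (by omega), if_pos h]

theorem lab_N (t : Fin (KK n)) (y y' : ZMod (KK n)) (h : y' = y + 1) :
    lab (Sum.inl (t, y)) (Sum.inl (t, y')) = sq (t.val + 1) y := by
  unfold lab
  dsimp only
  rw [if_neg (by omega), if_neg (by omega), if_pos h]

theorem lab_S (t : Fin (KK n)) (y y' : ZMod (KK n)) (h : y = y' + 1) :
    lab (Sum.inl (t, y)) (Sum.inl (t, y')) = sq t.val y' := by
  unfold lab
  dsimp only
  rw [if_neg (by omega), if_neg (by omega), if_neg]
  rintro rfl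
  apply two_ne (n := n)
  linear_combination - h

theorem inv_list (v : WW n) (L : List (WW n)) (e : nb v = L)
    (h : ∀ (i : ℕ) (hi : i < L.length), lab L[i] v =
      lab v (L[(i + 1) % L.length]'(Nat.mod_lt _ (by omega)))) :
    ∀ (i : ℕ) (hi : i < (nb v).length),
      lab (nb v)[i] v = lab v ((nb v)[(i + 1) % (nb v).length]'(Nat.mod_lt _ (by omega))) := by
  subst e
  exact h

theorem inv4 (v a b c d : WW n) (e : nb v = [a, b, c, d]) (h1 : lab a v = lab v b)
    (h2 : lab b v = lab v c) (h3 : lab c v = lab v d) (h4 : lab d v = lab v a) :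
    ∀ (i : ℕ) (hi : i < (nb v).length),
      lab (nb v)[i] v = lab v ((nb v)[(i + 1) % (nb v).length]'(Nat.mod_lt _ (by omega))) := by
  refine inv_list _ _ e ?_
  intro i hi
  simp only [List.length_cons, List.length_nil] at hi
  interval_cases i
  · exact h1
  · exact h2
  · exact h3
  · simpa using h4

theorem inv3 (v a b c : WW n) (e : nb v = [a, b, c]) (h1 : lab a v = lab v b)
    (h2 : lab b v = lab v c) (h3 : lab c v = lab v a) :
    ∀ (i : ℕ) (hi : i < (nb v).length),
      lab (nb v)[i] v = lab v ((nb v)[(i + 1) % (nb v).length]'(Nat.mod_lt _ (by omega))) := by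
  refine inv_list _ _ e ?_
  intro i hi
  simp only [List.length_cons, List.length_nil] at hi
  interval_cases i
  · exact h1
  · exact h2
  · simpa using h3

theorem lab_inv : ∀ (v : WW n) (i : ℕ) (hi : i < (nb v).length),
    lab (nb v)[i] v = lab v ((nb v)[(i + 1) % (nb v).length]'(Nat.mod_lt _ (by omega))) := by
  rintro (⟨⟨t, ht⟩, y⟩ | a) i hi
  · by_cases h : t + 1 < KK n
    · rcases Nat.eq_zero_or_pos t with rfl | h0
      · have e : nb (Sum.inl (⟨0, ht⟩, y)) = [Sum.inl (⟨0 + 1, h⟩, y), Sum.inl (⟨0, ht⟩, y + 1),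
          Sum.inr (blk y), Sum.inl (⟨0, ht⟩, y - 1)] := by
          unfold nb; dsimp only; rw [dif_pos h]; simp
        refine inv4 _ _ _ _ _ e ?_ ?_ ?_ ?_ i hi
        · rw [lab_W, lab_N] <;> first | rfl | (dsimp only; omega) | ring
        · rw [lab_S] <;> first | rfl | (dsimp only; omega) | ring
        · rw [lab_S] <;> first | rfl | (dsimp only; omega) | ring
        · rw [lab_N, lab_E] <;> first | rfl | (dsimp only; omega) | ring
      · have e : nb (Sum.inl (⟨t, ht⟩, y)) = [Sum.inl (⟨t + 1, h⟩, y), Sum.inl (⟨t, ht⟩, y + 1),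
          Sum.inl (⟨t - 1, by omega⟩, y), Sum.inl (⟨t, ht⟩, y - 1)] := by
          unfold nb; dsimp only; rw [dif_pos h, if_neg (by omega)]; simp
        refine inv4 _ _ _ _ _ e ?_ ?_ ?_ ?_ i hi
        · rw [lab_W, lab_N] <;> first | rfl | (dsimp only; omega) | ring
        · rw [lab_S, lab_W] <;> first | rfl | (dsimp only; omega) | ring
        · rw [lab_E, lab_S] <;> first | rfl | (dsimp only; omega) | ring
        · rw [lab_N, lab_E] <;> first | rfl | (dsimp only; omega) | ring
    · have h0 : 0 < t := by have := KK_ge (n := n); omega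
      have e : nb (Sum.inl (⟨t, ht⟩, y)) = [Sum.inl (⟨t, ht⟩, y + 1),
          Sum.inl (⟨t - 1, by omega⟩, y), Sum.inl (⟨t, ht⟩, y - 1)] := by
          unfold nb; dsimp only; rw [dif_neg h, if_neg (by omega)]; simp
      refine inv3 _ _ _ _ e ?_ ?_ ?_ i hi
      · rw [lab_S, lab_W] <;> first | rfl | (dsimp only; omega) | ring
      · rw [lab_E, lab_S] <;> first | rfl | (dsimp only; omega) | ring
      · rw [lab_N, lab_N, sq_last _ h, sq_last _ h] <;> ring
  · unfold nb at hi ⊢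
    simp only [List.length_map, List.length_range] at hi
    simp only [List.length_map, List.length_range, List.getElem_map, List.getElem_range]
    unfold lab
    simp only
    by_cases h : i + 1 < 2 * n
    · rw [Nat.mod_eq_of_lt h, row_succ]
    · have h1 : i = 2 * n - 1 := by omega
      have h2 : (i + 1) % (2 * n) = 0 := by
        rw [show i + 1 = 2 * n by omega, Nat.mod_self]
      rw [h2]
      unfold sq
      rw [dif_pos (by have := KK_ge (n := n); omega), dif_pos (by have := KK_ge (n := n); omega),
        if_pos ⟨rfl, by rw [row_mod a hi, h1]⟩, if_pos ⟨rfl, row_zero_end a⟩]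

theorem faces_ge : KK n * KK n + 2 ≤ (RR n).numFaces + n := by
  have hK := KK_ge (n := n)
  let T : Finset (Lab n) := (univ : Finset (Fin n)).image
    (fun a => some (some (⟨0, by omega⟩, row a (2 * n - 1))))
  have hT : T.card ≤ n := by
    refine card_image_le.trans ?_
    simp
  have h1 : (univ \ T : Finset (Lab n)).card ≤ (RR n).numFaces := by
    refine nbRot_faces nb_ok lab lab_inv _ ?_
    intro x hx
    rcases x with _ | _ | ⟨⟨i, hi⟩, y⟩
    · refine ⟨Sum.inl (⟨KK n - 1, by omega⟩, 0), Sum.inl (⟨KK n - 1, by omega⟩, 0 + 1), ?_, ?_⟩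
      · rw [mem_nb_ll]; simp
      · rw [lab_N _ _ _ rfl]
        exact sq_last _ (by simp; omega) _
    · refine ⟨Sum.inr ⟨0, by have := hn.1; omega⟩,
        Sum.inl (⟨0, by omega⟩, row ⟨0, by have := hn.1; omega⟩ 0), ?_, ?_⟩
      · rw [mem_nb_rl]
        exact ⟨rfl, blk_row _ (by have := hn.1; omega)⟩
      · unfold lab sq
        dsimp only
        rw [dif_pos (by omega), if_pos ⟨rfl, row_zero_end _⟩]
    · rcases Nat.eq_zero_or_pos i with rfl | h0
      · refine ⟨Sum.inl (⟨0, hi⟩, y), Sum.inr (blk y), ?_, ?_⟩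
        · rw [mem_nb_lr]; simp
        · unfold lab sq
          dsimp only
          rw [dif_pos (by omega), if_neg]
          rintro ⟨-, h⟩
          rw [mem_sdiff] at hx
          apply hx.2
          rw [mem_image]
          refine ⟨blk y, mem_univ _, ?_⟩
          rw [← h, row_blk]
      · refine ⟨Sum.inl (⟨i, hi⟩, y), Sum.inl (⟨i - 1, by omega⟩, y), ?_, ?_⟩
        · rw [mem_nb_ll]
          right; right; left
          exact ⟨by simp; omega, rfl⟩
        · rw [lab_W _ _ _ (by simp; omega)]
          unfold sq
          simp only
          rw [dif_pos hi, if_neg (by omega)]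
  have h2 := le_card_sdiff T (univ : Finset (Lab n))
  have h3 : (univ : Finset (Lab n)).card = KK n * KK n + 2 := by
    rw [card_univ, Fintype.card_option, Fintype.card_option, Fintype.card_prod, Fintype.card_fin,
      ZMod.card]
  omega

theorem edges_eq : Nat.card (RR n).G.edgeSet = 2 * (KK n * KK n) := by
  have h := nbRot_edges (nb_ok (n := n))
  have hK := KK_ge (n := n)
  have h1 : ∑ v : WW n, (nb v).length = 4 * (KK n * KK n) := by
    rw [Fintype.sum_sum_type, Fintype.sum_prod_type]
    have h2 : ∀ t : Fin (KK n), ∀ y, (nb (Sum.inl (t, y) : WW n)).length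
        = 3 + if t.val + 1 < KK n then 1 else 0 := by
      intro t y
      unfold nb
      by_cases h : t.val + 1 < KK n <;> simp [h]
    have h3 : ∀ a : Fin n, (nb (Sum.inr a : WW n)).length = 2 * n := by
      intro a
      unfold nb
      simp
    simp only [h2, h3, sum_const, card_univ, ZMod.card, Fintype.card_fin, smul_eq_mul]
    rw [← mul_sum, sum_add_distrib, ← Finset.sum_range (fun t => if t + 1 < KK n then 1 else 0)]
    have h4 : ∑ t ∈ range (KK n), (if t + 1 < KK n then 1 else 0) = KK n - 1 := by
      obtain ⟨m, hm⟩ : ∃ m, KK n = m + 1 := ⟨KK n - 1, by omega⟩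
      rw [hm, sum_range_succ]
      simp only [lt_irrefl, if_false, add_zero, Nat.add_sub_cancel]
      rw [sum_congr rfl (g := fun _ => 1)]
      · simp
      · intro x hx
        rw [mem_range] at hx
        rw [if_pos (by omega)]
    rw [h4]
    simp only [sum_const, card_univ, Fintype.card_fin, smul_eq_mul]
    have h5 : n * (2 * n) = KK n := by unfold KK; ring
    rw [h5]
    obtain ⟨m, hm⟩ : ∃ m, KK n = m + 1 := ⟨KK n - 1, by omega⟩
    rw [hm]
    simp only [Nat.add_sub_cancel]
    ring
  unfold RR
  omega

theorem RR_connected : (RR n).G.Connected := by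
  have hK := KK_ge (n := n)
  have c1 : ∀ t : ℕ, ∀ (ht : t < KK n) (y : ZMod (KK n)),
      (RR n).G.Reachable (Sum.inl (⟨t, ht⟩, y)) (Sum.inl (⟨0, by omega⟩, y)) := by
    intro t
    induction t with
    | zero => intro ht y; exact SimpleGraph.Reachable.refl _
    | succ t ih =>
      intro ht y
      refine SimpleGraph.Reachable.trans (SimpleGraph.Adj.reachable ?_) (ih (by omega) y)
      rw [RR_adj, mem_nb_ll]
      right; right; left
      exact ⟨rfl, rfl⟩
  have c2 : ∀ k : ℕ, (RR n).G.Reachable (Sum.inl (⟨0, by omega⟩, (k : ZMod (KK n))))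
      (Sum.inl (⟨0, by omega⟩, 0)) := by
    intro k
    induction k with
    | zero => rw [Nat.cast_zero]
    | succ k ih =>
      refine SimpleGraph.Reachable.trans (SimpleGraph.Adj.reachable ?_) ih
      rw [RR_adj, mem_nb_ll]
      right; right; right
      exact ⟨rfl, by push_cast; ring⟩
  have c3 : ∀ v : WW n, (RR n).G.Reachable v (Sum.inl (⟨0, by omega⟩, 0)) := by
    rintro (⟨⟨t, ht⟩, y⟩ | a)
    · refine (c1 t ht y).trans ?_
      have := c2 y.val
      rwa [ZMod.natCast_zmod_val] at this
    · refine SimpleGraph.Reachable.trans (SimpleGraph.Adj.reachable ?_)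
        (c2 (a.val * (2 * n) + 0))
      rw [RR_adj, mem_nb_rl]
      exact ⟨rfl, blk_row a (by have := hn.1; omega)⟩
  have : Nonempty (WW n) := ⟨Sum.inl (⟨0, by omega⟩, 0)⟩
  exact ⟨fun u v => (c3 u).trans (c3 v).symm⟩

theorem RR_plane : (RR n).IsPlane := by
  refine plane_of_le _ RR_connected ?_
  have h1 := faces_ge (n := n)
  have h2 := edges_eq (n := n)
  have h3 : Nat.card (WW n) = KK n * KK n + n := by
    rw [Nat.card_eq_fintype_card, Fintype.card_sum, Fintype.card_prod, Fintype.card_fin,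
      Fintype.card_fin, ZMod.card]
  omega

end Plane

end FNC
namespace FNC

open WBW Finset

section Rays
open Classical
set_option linter.unusedSectionVars false

theorem nbRot_next {V : Type} {nb : V → List V} (h : NbOK nb) (v a b : V) (L₁ L₂ : List V)
    (e : nb v = L₁ ++ a :: b :: L₂) : (nbRot h).rot v s(v, a) = s(v, b) := by
  have h1 := nbEdges_nodup h v
  show ((nb v).map (fun u => s(v, u))).formPerm s(v, a) = s(v, b)
  rw [e] at h1 ⊢
  have h2 := List.formPerm_apply_lt_getElem _ h1 L₁.length (by simp)
  simpa [List.getElem_append] using h2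

variable {n : ℕ} [hn : Fact (2 ≤ n)]

theorem power_of_adj {V : Type} (R : RotationSystem V) (l : ℕ) {u v : V} (h : R.G.Adj u v) :
    (R.power l).Adj u v := by
  unfold RotationSystem.power
  exact Or.inl h

theorem nb_split (t : ℕ) (ht : t + 1 < KK n) (y : ZMod (KK n)) :
    ∃ L : List (WW n), nb (Sum.inl (⟨t + 1, ht⟩, y)) =
      L ++ [Sum.inl (⟨t + 1, ht⟩, y + 1), Sum.inl (⟨t, by omega⟩, y),
        Sum.inl (⟨t + 1, ht⟩, y - 1)] := by
  unfold nb
  dsimp only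
  rw [if_neg (by omega)]
  exact ⟨_, rfl⟩

theorem diag_down {l : ℕ} (hl : 2 ≤ l) (t : ℕ) (ht : t + 1 < KK n) (y : ZMod (KK n)) :
    ((RR n).power l).Adj (Sum.inl (⟨t + 1, ht⟩, y)) (Sum.inl (⟨t, by omega⟩, y - 1)) := by
  obtain ⟨L, hL⟩ := nb_split t ht (y - 1)
  rw [sub_add_cancel] at hL
  refine power_of_rot (RR n) hl (v := Sum.inl (⟨t + 1, ht⟩, y - 1)) ?_ ?_ ?_ ?_
  · rw [RR_adj, hL]; simp
  · rw [RR_adj, hL]; simp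
  · simp
  · exact nbRot_next nb_ok _ _ _ L _ hL

theorem diag_up {l : ℕ} (hl : 2 ≤ l) (t : ℕ) (ht : t + 1 < KK n) (y : ZMod (KK n)) :
    ((RR n).power l).Adj (Sum.inl (⟨t + 1, ht⟩, y)) (Sum.inl (⟨t, by omega⟩, y + 1)) := by
  obtain ⟨L, hL⟩ := nb_split t ht (y + 1)
  rw [add_sub_cancel_right] at hL
  refine SimpleGraph.Adj.symm ?_
  refine power_of_rot (RR n) hl (v := Sum.inl (⟨t + 1, ht⟩, y + 1)) ?_ ?_ ?_ ?_
  · rw [RR_adj, hL]; simp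
  · rw [RR_adj, hL]; simp
  · simp
  · refine nbRot_next nb_ok _ _ _ (L ++ [Sum.inl (⟨t + 1, ht⟩, y + 1 + 1)]) [] ?_
    rw [hL]
    simp

/-- parity map -/
def par (n : ℕ) : ZMod (KK n) →+* ZMod 2 :=
  ZMod.castHom (show 2 ∣ KK n from ⟨n * n, by unfold KK; ring⟩) (ZMod 2)

/-- slot of a grid vertex -/
noncomputable def slot (t : ℕ) (y : ZMod (KK n)) : ZMod (KK n) :=
  if par n y + (t : ZMod 2) = 0 then y - (t : ZMod (KK n)) else y + (t : ZMod (KK n))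

theorem slot_zero (y : ZMod (KK n)) : slot 0 y = y := by
  unfold slot
  simp

theorem two_eq : (2 : ZMod 2) = 0 := rfl

theorem ray_step {l : ℕ} (hl : 2 ≤ l) (t : ℕ) (ht : t + 1 < KK n) (y : ZMod (KK n)) :
    ∃ y' : ZMod (KK n), slot t y' = slot (t + 1) y ∧
      ((RR n).power l).Adj (Sum.inl (⟨t + 1, ht⟩, y)) (Sum.inl (⟨t, by omega⟩, y')) := by
  by_cases h : par n y + ((t + 1 : ℕ) : ZMod 2) = 0
  · refine ⟨y - 1, ?_, diag_down hl t ht y⟩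
    unfold slot
    rw [if_pos h, if_pos]
    · push_cast; ring
    · rw [map_sub, map_one]
      push_cast at h
      linear_combination h - two_eq
  · refine ⟨y + 1, ?_, diag_up hl t ht y⟩
    unfold slot
    rw [if_neg h, if_neg]
    · push_cast; ring
    · rw [map_add, map_one]
      intro h2
      apply h
      push_cast
      linear_combination h2

theorem ray_reach {l : ℕ} (hl : 2 ≤ l) (S : Set (WW n)) (k : ZMod (KK n))
    (h1 : ∀ (t : Fin (KK n)) (y : ZMod (KK n)), slot t.val y = k → (Sum.inl (t, y) : WW n) ∈ S)
    (h2 : (Sum.inr (blk k) : WW n) ∈ S) :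
    ∀ (t : ℕ) (ht : t < KK n) (y : ZMod (KK n)) (hs : slot t y = k),
      (((RR n).power l).induce S).Reachable ⟨Sum.inl (⟨t, ht⟩, y), h1 ⟨t, ht⟩ y hs⟩
        ⟨Sum.inr (blk k), h2⟩ := by
  intro t
  induction t with
  | zero =>
    intro ht y hs
    refine SimpleGraph.Adj.reachable ?_
    show ((RR n).power l).Adj (Sum.inl (⟨0, ht⟩, y)) (Sum.inr (blk k))
    apply power_of_adj
    rw [slot_zero] at hs
    rw [RR_adj, mem_nb_lr]
    exact ⟨rfl, by rw [hs]⟩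
  | succ t ih =>
    intro ht y hs
    obtain ⟨y', hy', hadj⟩ := ray_step hl t ht y
    refine SimpleGraph.Reachable.trans ?_ (ih (by omega) y' (hy'.trans hs))
    refine SimpleGraph.Adj.reachable ?_
    exact hadj

theorem meeting (a b : Fin n) : ∃ (t : ℕ) (_ : t < KK n) (y : ZMod (KK n)),
    slot t y = row a (2 * b.val) ∧ slot t (y + 1) = row b (2 * a.val + 1) := by
  have ha := a.2
  have hb := b.2
  have e1 : a.val * n + b.val < n * n := by nlinarith
  have e2 : b.val * n + a.val < n * n := by nlinarith
  obtain ⟨t, ht⟩ : ∃ t, t + (a.val * n + b.val) = b.val * n + a.val + n * n :=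
    ⟨b.val * n + a.val + n * n - (a.val * n + b.val), by omega⟩
  have hp : par n (row a (2 * b.val)) = 0 := by
    unfold row
    rw [map_natCast]
    push_cast
    linear_combination (a.val * n + b.val : ZMod 2) * two_eq
  have hp2 : par n (row a (2 * b.val) + (t : ZMod (KK n))) + (t : ZMod 2) = 0 := by
    rw [map_add, map_natCast, hp]
    linear_combination (t : ZMod 2) * two_eq
  refine ⟨t, ?_, row a (2 * b.val) + (t : ZMod (KK n)), ?_, ?_⟩
  · unfold KK
    nlinarith
  · unfold slot
    rw [if_pos hp2]
    ring
  · unfold slot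
    rw [if_neg]
    · have h3 : ((KK n : ℕ) : ZMod (KK n)) = 0 := ZMod.natCast_self _
      have h4 : ((t + (a.val * n + b.val) : ℕ) : ZMod (KK n)) =
        ((b.val * n + a.val + n * n : ℕ) : ZMod (KK n)) := by rw [ht]
      unfold row
      unfold KK at h3
      push_cast at h3 h4 ⊢
      linear_combination h3 + 2 * h4
    · rw [map_add, map_one]
      intro h
      apply one_ne_zero (α := ZMod 2)
      linear_combination h - hp2

theorem contraction {l : ℕ} (hl : 2 ≤ l) :
    IsContractionOf (⊤ : SimpleGraph (Fin n)) ((RR n).power l) := by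
  let f : WW n → Fin n := fun v => match v with
    | Sum.inl (t, y) => blk (slot t.val y)
    | Sum.inr a => a
  refine ⟨f, fun a => ⟨Sum.inr a, rfl⟩, ?_, ?_⟩
  · intro u
    have hu : (Sum.inr u : WW n) ∈ f ⁻¹' {u} := rfl
    have key : ∀ v : (f ⁻¹' {u}), (((RR n).power l).induce (f ⁻¹' {u})).Reachable v
        ⟨Sum.inr u, hu⟩ := by
      rintro ⟨⟨⟨t, ht⟩, y⟩ | a, hv⟩
      · have hv' : blk (slot t y) = u := hv
        subst hv'
        have hh : ∀ (t' : Fin (KK n)) (y' : ZMod (KK n)), slot t'.val y' = slot t y →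
            (Sum.inl (t', y') : WW n) ∈ f ⁻¹' {blk (slot t y)} := by
          intro t' y' h'
          show blk (slot t'.val y') = _
          rw [h']
        exact ray_reach hl _ (slot t y) hh hu t ht y rfl
      · have hv' : a = u := hv
        subst hv'
        exact SimpleGraph.Reachable.refl _
    have : Nonempty (f ⁻¹' {u}) := ⟨⟨Sum.inr u, hu⟩⟩
    exact ⟨fun v w => (key v).trans (key w).symm⟩
  · intro a b
    rw [SimpleGraph.top_adj]
    refine ⟨fun hab => ⟨hab, ?_⟩, fun h => h.1⟩
    obtain ⟨t, ht, y, h1, h2⟩ := meeting a b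
    refine ⟨Sum.inl (⟨t, ht⟩, y), Sum.inl (⟨t, ht⟩, y + 1), ?_, ?_, ?_⟩
    · apply power_of_adj
      rw [RR_adj, mem_nb_ll]
      simp
    · show blk (slot t y) = a
      rw [h1, blk_row a (by omega)]
    · show blk (slot t (y + 1)) = b
      rw [h2, blk_row b (by omega)]

/-- the vertex set used by the subdivided edge `ab` -/
def pset (a b : Fin n) : Set (WW n) := fun v => match v with
  | Sum.inl (t, y) => slot t.val y = row a (2 * b.val) ∨ slot t.val y = row b (2 * a.val + 1)
  | Sum.inr c => c = a ∨ c = b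

theorem path_of_induce {V : Type} (G : SimpleGraph V) (S : Set V) (x y : S)
    (h : (G.induce S).Reachable x y) :
    ∃ w : G.Walk x.val y.val, w.IsPath ∧ ∀ v ∈ w.support, v ∈ S := by
  obtain ⟨w, hw⟩ := h.exists_isPath
  refine ⟨w.map (SimpleGraph.Embedding.induce S).toHom, ?_, ?_⟩
  · exact SimpleGraph.Walk.IsPath.map Subtype.val_injective hw
  · intro v hv
    have hv' := (SimpleGraph.Walk.support_map (SimpleGraph.Embedding.induce S).toHom w) ▸ hv
    obtain ⟨x, -, rfl⟩ := List.mem_map.1 hv'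
    exact x.2

theorem path_exists {l : ℕ} (hl : 2 ≤ l) (a b : Fin n) :
    ∃ w : ((RR n).power l).Walk (Sum.inr a) (Sum.inr b), w.IsPath ∧
      ∀ v ∈ w.support, v ∈ pset a b := by
  have ma : (Sum.inr a : WW n) ∈ pset a b := Or.inl rfl
  have mb : (Sum.inr b : WW n) ∈ pset a b := Or.inr rfl
  have hr : (((RR n).power l).induce (pset a b)).Reachable ⟨Sum.inr a, ma⟩ ⟨Sum.inr b, mb⟩ := by
    obtain ⟨t, ht, y, h1, h2⟩ := meeting a b
    have b1 : blk (row a (2 * b.val)) = a := blk_row a (by omega)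
    have b2 : blk (row b (2 * a.val + 1)) = b := blk_row b (by omega)
    have r1 := ray_reach hl (pset a b) (row a (2 * b.val)) (fun t y h => Or.inl h)
      (by rw [b1]; exact ma) t ht y h1
    have r2 := ray_reach hl (pset a b) (row b (2 * a.val + 1)) (fun t y h => Or.inr h)
      (by rw [b2]; exact mb) t ht (y + 1) h2
    simp only [b1] at r1
    simp only [b2] at r2
    refine r1.symm.trans (SimpleGraph.Reachable.trans ?_ r2)
    refine SimpleGraph.Adj.reachable ?_
    show ((RR n).power l).Adj (Sum.inl (⟨t, ht⟩, y)) (Sum.inl (⟨t, ht⟩, y + 1))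
    apply power_of_adj
    rw [RR_adj, mem_nb_ll]
    simp
  exact path_of_induce _ _ _ _ hr

theorem topMinor {l : ℕ} (hl : 2 ≤ l) :
    IsTopMinor (⊤ : SimpleGraph (Fin n)) ((RR n).power l) := by
  refine ⟨Sum.inr, Sum.inr_injective, fun x y _ => Classical.choose (path_exists hl x y),
    fun x y _ => (Classical.choose_spec (path_exists hl x y)).1, ?_, ?_⟩
  · rintro x y _ v hv ⟨c, rfl⟩
    have h := (Classical.choose_spec (path_exists hl x y)).2 _ hv
    rcases h with h | h
    · exact Or.inl (congrArg _ h)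
    · exact Or.inr (congrArg _ h)
  · intro x y x' y' _ _ hne v hv hv'
    have h := (Classical.choose_spec (path_exists hl x y)).2 _ hv
    have h' := (Classical.choose_spec (path_exists hl x' y')).2 _ hv'
    rcases v with ⟨t, z⟩ | c
    · exfalso
      have key : ∀ {a b : Fin n} {i j : ℕ}, i < 2 * n → j < 2 * n → row a i = row b j →
          a = b ∧ i = j := by
        intro a b i j hi hj hij
        exact ⟨by rw [← blk_row a hi, hij, blk_row b hj], by rw [← row_mod a hi, hij, row_mod b hj]⟩
      apply hne
      rcases h with h | h <;> rcases h' with h' | h' <;> rw [h] at h'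
      · obtain ⟨e1, e2⟩ := key (by omega) (by omega) h'
        have e3 : y = y' := by ext; omega
        rw [e1, e3]
      · obtain ⟨e1, e2⟩ := key (by omega) (by omega) h'
        omega
      · obtain ⟨e1, e2⟩ := key (by omega) (by omega) h'
        omega
      · obtain ⟨e1, e2⟩ := key (by omega) (by omega) h'
        have e3 : x = x' := by ext; omega
        rw [e1, e3]
    · exact ⟨c, rfl⟩

theorem power_flat (l : ℕ) : IsFlat l ((RR n).power l) :=
  ⟨WW n, inferInstance, RR n, id, RR_plane, Function.injective_id, fun _ _ h => h⟩

end Rays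

end FNC
/-- Corollary 2, first part: for every `λ ≥ 2`, the class of `λ`-flat
graphs is closed neither under topological minors nor under contractions. -/
theorem flat_not_closed (l : ℕ) (hl : 2 ≤ l) :
    (∃ (A B : Type) (_ : Finite A) (_ : Finite B)
        (G : SimpleGraph A) (H : SimpleGraph B),
      WBW.IsFlat l G ∧ WBW.IsTopMinor H G ∧ ¬ WBW.IsFlat l H) ∧
    (∃ (A B : Type) (_ : Finite A) (_ : Finite B)
        (G : SimpleGraph A) (H : SimpleGraph B),
      WBW.IsFlat l G ∧ WBW.IsContractionOf H G ∧ ¬ WBW.IsFlat l H) := by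
  obtain ⟨n, hn⟩ : ∃ n, n = 216 * (1 + 2 * (5 ^ l * l)) + 2 := ⟨_, rfl⟩
  have hfact : Fact (2 ≤ n) := ⟨by omega⟩
  have hnf : ¬ WBW.IsFlat l (⊤ : SimpleGraph (Fin n)) :=
    FNC.not_flat (by omega) (by omega)
  exact ⟨⟨FNC.WW n, Fin n, inferInstance, inferInstance, (FNC.RR n).power l, ⊤,
      FNC.power_flat l, FNC.topMinor hl, hnf⟩,
    ⟨FNC.WW n, Fin n, inferInstance, inferInstance, (FNC.RR n).power l, ⊤,
      FNC.power_flat l, FNC.contraction hl, hnf⟩⟩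
end

section
/- For every ξ ≥ 1, the class of ξ-nearly planar graphs is not closed under taking topological minors and is not closed under taking contractions; that is, there exist a ξ-nearly planar graph with a topological minor that is not ξ-nearly planar, and a ξ-nearly planar graph with a contraction that is not ξ-nearly planar. -/
namespace NPaux

lemma exists_log (F : ℝ × ℝ → ℂ) (hF : Continuous F) (h0 : ∀ z, F z ≠ 0) :
    ∃ L : ℝ × ℝ → ℂ, Continuous L ∧ ∀ z, Complex.exp (L z) = F z := by
  obtain ⟨L, hL, -⟩ := Complex.isCoveringMapOn_exp.existsUnique_continuousMap_lifts
    (⟨F, hF⟩ : C(ℝ × ℝ, ℂ)) (a₀ := (0, 0)) (e₀ := Complex.log (F (0, 0)))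
    (by simpa using Complex.exp_log (h0 (0, 0))) (fun z => by simpa using h0 z)
  exact ⟨L, L.continuous, fun z => congrFun hL.2 z⟩

lemma exists_log1 (F : ℝ → ℂ) (hF : Continuous F) (h0 : ∀ z, F z ≠ 0) :
    ∃ L : ℝ → ℂ, Continuous L ∧ ∀ z, Complex.exp (L z) = F z := by
  obtain ⟨L, hL, h⟩ := exists_log (fun z => F z.1) (by fun_prop) (fun z => h0 _)
  exact ⟨fun t => L (t, 0), by fun_prop, fun z => h (z, 0)⟩

/-- two logs of `F` and `c F` have the same increments -/
lemma log_incr (L M : ℝ → ℂ) (hL : Continuous L) (hM : Continuous M) (c : ℂ)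
    (h : ∀ t, Complex.exp (L t) = c * Complex.exp (M t)) : L 1 - L 0 = M 1 - M 0 := by
  have hc : c ≠ 0 := by
    intro hc
    have := h 0
    simp [hc] at this
  obtain ⟨d, hd⟩ : ∃ d, Complex.exp d = c := ⟨_, Complex.exp_log hc⟩
  have h1 : ∀ t, ∃ n : ℤ, L t = M t + d + n * (2 * Real.pi * Complex.I) := fun t => by
    rw [← Complex.exp_eq_exp_iff_exists_int, h, Complex.exp_add, hd, mul_comm]
  choose n hn using h1
  have h2 : ∀ t, ((n t : ℝ)) = ((L t - M t - d) / (2 * Real.pi * Complex.I)).re := by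
    intro t
    rw [hn t]
    have : (2 * Real.pi * Complex.I : ℂ) ≠ 0 := Complex.two_pi_I_ne_zero
    rw [show (M t + d + n t * (2 * Real.pi * Complex.I) - M t - d) = n t * (2 * Real.pi * Complex.I) by ring,
      mul_div_cancel_right₀ _ this]
    simp
  have h3 : Continuous (fun t => (n t : ℝ)) := by
    simp only [h2]
    fun_prop
  have h4 : Continuous n := by
    exact Int.isClosedEmbedding_coe_real.isInducing.continuous_iff.2 h3
  have h5 : n 1 = n 0 := PreconnectedSpace.constant inferInstance h4
  rw [hn 1, hn 0, h5]; ring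

/-- the van Kampen obstruction for `K₅` -/
theorem K5 (p : Fin 5 → ℂ) (g : Fin 5 → Fin 5 → ℝ → ℂ)
    (hp : Function.Injective p)
    (hg : ∀ a b, a ≠ b → Continuous (g a b))
    (hg0 : ∀ a b, a ≠ b → g a b 0 = p a) (hg1 : ∀ a b, a ≠ b → g a b 1 = p b)
    (hv : ∀ a b, a ≠ b → ∀ w, w ≠ a → w ≠ b → ∀ t, g a b t ≠ p w)
    (hd : ∀ a b c d, a ≠ b → c ≠ d → a ≠ c → a ≠ d → b ≠ c → b ≠ d →
      ∀ s t, g a b s ≠ g c d t) : False := by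
  have h1 : ∀ a b w, ∃ L : ℝ → ℂ, (a ≠ b → w ≠ a → w ≠ b → 
      (Continuous L ∧ ∀ t, Complex.exp (L t) = g a b t - p w)) := by
    intro a b w
    by_cases h : a ≠ b ∧ w ≠ a ∧ w ≠ b
    · obtain ⟨L, hL⟩ := exists_log1 (fun t => g a b t - p w) ((hg a b h.1).sub continuous_const)
        (fun t => sub_ne_zero.2 (hv a b h.1 w h.2.1 h.2.2 t))
      exact ⟨L, fun _ _ _ => hL⟩
    · exact ⟨0, fun h1 h2 h3 => (h ⟨h1, h2, h3⟩).elim⟩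
  choose L hL using h1
  have key : ∀ a b c d, a ≠ b → c ≠ d → a ≠ c → a ≠ d → b ≠ c → b ≠ d →
      (L a b c 1 - L a b c 0) + (L c d b 1 - L c d b 0) =
      (L c d a 1 - L c d a 0) + (L a b d 1 - L a b d 0) := by
    intro a b c d hab hcd hac had hbc hbd
    obtain ⟨M, hM, hE⟩ := exists_log (fun z => g a b z.1 - g c d z.2)
      (((hg a b hab).comp continuous_fst).sub ((hg c d hcd).comp continuous_snd))
      (fun z => sub_ne_zero.2 (hd a b c d hab hcd hac had hbc hbd _ _))
    have e1 := log_incr (fun t => M (t, 0)) (L a b c) (by fun_prop)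
      (hL a b c hab hac.symm hbc.symm).1 1 (fun t => by
        rw [hE, (hL a b c hab hac.symm hbc.symm).2]; simp [hg0 c d hcd])
    have e2 := log_incr (fun t => M (t, 1)) (L a b d) (by fun_prop)
      (hL a b d hab had.symm hbd.symm).1 1 (fun t => by
        rw [hE, (hL a b d hab had.symm hbd.symm).2]; simp [hg1 c d hcd])
    have e3 := log_incr (fun t => M (0, t)) (L c d a) (by fun_prop)
      (hL c d a hcd hac had).1 (-1) (fun t => by
        rw [hE, (hL c d a hcd hac had).2]; simp [hg0 a b hab])
    have e4 := log_incr (fun t => M (1, t)) (L c d b) (by fun_prop)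
      (hL c d b hcd hbc hbd).1 (-1) (fun t => by
        rw [hE, (hL c d b hcd hbc hbd).2]; simp [hg1 a b hab])
    rw [← e1, ← e2, ← e3, ← e4]; ring
  obtain ⟨l, hls, hl⟩ : ∃ l : Fin 5 → Fin 5 → ℂ, (∀ a b, l a b = l b a) ∧
      ∀ a b, a < b → Complex.exp (l a b) = p a - p b := by
    refine ⟨fun a b => Complex.log (p (min a b) - p (max a b)), fun a b => by
      simp only [min_comm a b, max_comm a b], fun a b h => ?_⟩
    simp only [min_eq_left h.le, max_eq_right h.le]
    exact Complex.exp_log (sub_ne_zero.2 (hp.ne h.ne))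
  let J : Fin 5 → Fin 5 → ℤ := fun a b => if b < a then 1 else 0
  have hJ : ∀ a b, a ≠ b → Complex.exp (l a b + J a b * (Real.pi * Complex.I)) = p a - p b := by
    intro a b hab
    rcases lt_or_gt_of_ne hab with h | h
    · simp [J, hl a b h, not_lt.2 h.le]
    · simp [J, h, hls a b, hl b a h, Complex.exp_add]
  have h2 : ∀ a b w, ∃ n : ℤ, a ≠ b → w ≠ a → w ≠ b →
      L a b w 1 - L a b w 0 = (l b w + J b w * (Real.pi * Complex.I))
        - (l a w + J a w * (Real.pi * Complex.I)) + n * (2 * Real.pi * Complex.I) := by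
    intro a b w
    by_cases h : a ≠ b ∧ w ≠ a ∧ w ≠ b
    · have : Complex.exp (L a b w 1 - L a b w 0) =
        Complex.exp ((l b w + J b w * (Real.pi * Complex.I))
        - (l a w + J a w * (Real.pi * Complex.I))) := by
        rw [Complex.exp_sub, Complex.exp_sub, hJ _ _ h.2.1.symm, hJ _ _ h.2.2.symm,
          (hL a b w h.1 h.2.1 h.2.2).2, (hL a b w h.1 h.2.1 h.2.2).2, hg0 _ _ h.1, hg1 _ _ h.1]
      obtain ⟨n, hn⟩ := Complex.exp_eq_exp_iff_exists_int.1 this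
      exact ⟨n, fun _ _ _ => hn⟩
    · exact ⟨0, fun h1 h2 h3 => (h ⟨h1, h2, h3⟩).elim⟩
  choose n hn using h2
  have fin : ∀ a b c d, a ≠ b → c ≠ d → a ≠ c → a ≠ d → b ≠ c → b ≠ d →
      J b c - J a c + J d b - J c b - J d a + J c a - J b d + J a d
        + 2 * (n a b c + n c d b - n c d a - n a b d) = 0 := by
    intro a b c d hab hcd hac had hbc hbd
    have k := key a b c d hab hcd hac had hbc hbd
    rw [hn a b c hab hac.symm hbc.symm, hn a b d hab had.symm hbd.symm, hn c d a hcd hac had,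
      hn c d b hcd hbc hbd, hls d b, hls c b, hls d a, hls c a] at k
    have hpi : (Real.pi * Complex.I : ℂ) ≠ 0 := by simp [Real.pi_ne_zero]
    have : ((J b c - J a c + J d b - J c b - J d a + J c a - J b d + J a d
        + 2 * (n a b c + n c d b - n c d a - n a b d) : ℤ) : ℂ) * (Real.pi * Complex.I) = 0 := by
      push_cast
      linear_combination k
    exact_mod_cast (mul_eq_zero.1 this).resolve_right hpi
  have q1 := fin 0 1 2 3 (by decide) (by decide) (by decide) (by decide) (by decide) (by decide)
  have q2 := fin 0 1 2 4 (by decide) (by decide) (by decide) (by decide) (by decide) (by decide)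
  have q3 := fin 0 1 3 4 (by decide) (by decide) (by decide) (by decide) (by decide) (by decide)
  have q4 := fin 0 2 1 3 (by decide) (by decide) (by decide) (by decide) (by decide) (by decide)
  have q5 := fin 0 2 1 4 (by decide) (by decide) (by decide) (by decide) (by decide) (by decide)
  have q6 := fin 0 2 3 4 (by decide) (by decide) (by decide) (by decide) (by decide) (by decide)
  have q7 := fin 0 3 1 2 (by decide) (by decide) (by decide) (by decide) (by decide) (by decide)
  have q8 := fin 0 3 1 4 (by decide) (by decide) (by decide) (by decide) (by decide) (by decide)
  have q9 := fin 0 3 2 4 (by decide) (by decide) (by decide) (by decide) (by decide) (by decide)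
  have q10 := fin 0 4 1 2 (by decide) (by decide) (by decide) (by decide) (by decide) (by decide)
  have q11 := fin 0 4 1 3 (by decide) (by decide) (by decide) (by decide) (by decide) (by decide)
  have q12 := fin 0 4 2 3 (by decide) (by decide) (by decide) (by decide) (by decide) (by decide)
  have q13 := fin 1 2 3 4 (by decide) (by decide) (by decide) (by decide) (by decide) (by decide)
  have q14 := fin 1 3 2 4 (by decide) (by decide) (by decide) (by decide) (by decide) (by decide)
  have q15 := fin 1 4 2 3 (by decide) (by decide) (by decide) (by decide) (by decide) (by decide)
  simp [J] at q1 q2 q3 q4 q5 q6 q7 q8 q9 q10 q11 q12 q13 q14 q15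
  omega

end NPaux

namespace NPaux
open WBW

lemma arc_zero_one {n : ℕ} (D : Drawing (⊤ : SimpleGraph (Fin n))) (a b : Fin n) (hab : a ≠ b) :
    (D.arc s(a, b) 0 = D.vmap a ∧ D.arc s(a, b) 1 = D.vmap b) ∨
    (D.arc s(a, b) 0 = D.vmap b ∧ D.arc s(a, b) 1 = D.vmap a) := by
  have h := D.arc_ends s(a, b) (by simpa using hab)
  rw [Sym2.map_mk, Sym2.eq_iff] at h
  rcases h with ⟨h1, h2⟩ | ⟨h1, h2⟩
  · exact Or.inl ⟨h1.symm, h2.symm⟩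
  · exact Or.inr ⟨h2.symm, h1.symm⟩

lemma vertex_on_arc {n : ℕ} (D : Drawing (⊤ : SimpleGraph (Fin n))) (a b : Fin n) (hab : a ≠ b)
    (w : Fin n) (h : D.vmap w ∈ Set.range (D.arc s(a, b))) : w = a ∨ w = b := by
  obtain ⟨t, ht⟩ := h
  have hav := D.interior_avoids s(a, b) (by simpa using hab) t
  rw [ht] at hav
  have h01 := arc_zero_one D a b hab
  by_cases h0 : (t : ℝ) = 0
  · have : t = 0 := Subtype.ext h0
    subst this
    rcases h01 with h | h
    · left; exact D.vmap_inj (ht.symm.trans h.1)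
    · right; exact D.vmap_inj (ht.symm.trans h.1)
  by_cases h1 : (t : ℝ) = 1
  · have : t = 1 := Subtype.ext h1
    subst this
    rcases h01 with h | h
    · right; exact D.vmap_inj (ht.symm.trans h.2)
    · left; exact D.vmap_inj (ht.symm.trans h.2)
  exact (hav h0 h1 ⟨w, rfl⟩).elim

lemma meet_cross {n : ℕ} (D : Drawing (⊤ : SimpleGraph (Fin n))) (a b c d : Fin n)
    (hab : a ≠ b) (hcd : c ≠ d) (hac : a ≠ c) (had : a ≠ d) (hbc : b ≠ c) (hbd : b ≠ d)
    (h : ¬ Disjoint (Set.range (D.arc s(a, b))) (Set.range (D.arc s(c, d)))) :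
    ∃ q, (s(c, d), q) ∈ crossingSet D s(a, b) := by
  obtain ⟨q, h1, h2⟩ := Set.not_disjoint_iff.1 h
  refine ⟨q, by simpa using hcd, ?_, h1, h2, ?_⟩
  · intro h
    rw [Sym2.eq_iff] at h
    rcases h with h | h
    · exact hac h.1.symm
    · exact hbc h.1.symm
  · rintro ⟨w, rfl⟩
    rcases vertex_on_arc D a b hab w h1 with rfl | rfl <;>
    rcases vertex_on_arc D c d hcd w h2 with rfl | rfl <;> contradiction

/-- vertices in `S` have pairwise disjoint independent edges -/
def Good {n : ℕ} (D : Drawing (⊤ : SimpleGraph (Fin n))) (S : Finset (Fin n)) : Prop :=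
  ∀ a ∈ S, ∀ b ∈ S, ∀ c ∈ S, ∀ d ∈ S, a ≠ b → c ≠ d → a ≠ c → a ≠ d → b ≠ c → b ≠ d →
    Disjoint (Set.range (D.arc s(a, b))) (Set.range (D.arc s(c, d)))

lemma greedy {n x : ℕ} (D : Drawing (⊤ : SimpleGraph (Fin n)))
    (hD : ∀ e ∈ (⊤ : SimpleGraph (Fin n)).edgeSet,
      (crossingSet D e).Finite ∧ (crossingSet D e).ncard ≤ x)
    (hn : 72 * x + 7 ≤ n) (k : ℕ) (hk : k ≤ 6) :
    ∃ S : Finset (Fin n), S.card = k ∧ Good D S := by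
  classical
  induction k with
  | zero => exact ⟨∅, rfl, by simp [Good]⟩
  | succ k ih =>
    obtain ⟨S, hS, hG⟩ := ih (by omega)
    let C : Sym2 (Fin n) → Finset (Sym2 (Fin n) × unitSphere) := fun e =>
      if h : e ∈ (⊤ : SimpleGraph (Fin n)).edgeSet then (hD e h).1.toFinset else ∅
    have hC : ∀ e, (C e).card ≤ x := by
      intro e
      by_cases h : e ∈ (⊤ : SimpleGraph (Fin n)).edgeSet
      · simp only [C, dif_pos h]
        rw [← Set.ncard_eq_toFinset_card _ (hD e h).1]
        exact (hD e h).2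
      · simp only [C, dif_neg h, Finset.card_empty, Nat.zero_le]
    let K : Finset (Fin n) := S ∪ (S ×ˢ S).biUnion fun ab =>
      (C s(ab.1, ab.2)).biUnion fun q => q.1.toFinset
    have hK : K.card < n := by
      calc K.card ≤ S.card + ((S ×ˢ S).biUnion fun ab =>
            (C s(ab.1, ab.2)).biUnion fun q => q.1.toFinset).card := Finset.card_union_le _ _
        _ ≤ S.card + (S ×ˢ S).card * (x * 2) := by
            gcongr
            refine Finset.card_biUnion_le_card_mul _ _ _ fun ab _ => ?_
            refine (Finset.card_biUnion_le_card_mul _ _ 2 fun q _ => ?_).trans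
              (Nat.mul_le_mul_right _ (hC _))
            obtain ⟨e, y⟩ := q
            induction e with
            | _ u v => 
              rw [Sym2.toFinset_mk_eq]
              exact Finset.card_le_two
        _ ≤ 6 + 6 * 6 * (x * 2) := by
            rw [Finset.card_product, hS]
            have : k ≤ 6 := by omega
            gcongr
        _ < n := by omega
    obtain ⟨w, hw⟩ : ∃ w, w ∉ K := by
      by_contra hcon
      push Not at hcon
      have : K = Finset.univ := Finset.eq_univ_iff_forall.2 hcon
      rw [this] at hK
      simp at hK
    have hwS : w ∉ S := fun h => hw (Finset.mem_union_left _ h)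
    have hwC : ∀ a ∈ S, ∀ b ∈ S, a ≠ b → ∀ q ∈ crossingSet D s(a, b), w ∉ q.1 := by
      intro a ha b hb hab q hq hwq
      apply hw
      apply Finset.mem_union_right
      simp only [Finset.mem_biUnion, Finset.mem_product]
      refine ⟨(a, b), ⟨ha, hb⟩, q, ?_, by simpa using hwq⟩
      have : s(a, b) ∈ (⊤ : SimpleGraph (Fin n)).edgeSet := by simpa using hab
      simp only [C, dif_pos this]
      simpa using hq
    have main : ∀ a ∈ S, ∀ b ∈ S, ∀ c d, a ≠ b → c ≠ d → a ≠ c → a ≠ d → b ≠ c → b ≠ d →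
        w ∈ s(c, d) → Disjoint (Set.range (D.arc s(a, b))) (Set.range (D.arc s(c, d))) := by
      intro a ha b hb c d hab hcd hac had hbc hbd hmem
      by_contra hcon
      obtain ⟨q, hq⟩ := meet_cross D a b c d hab hcd hac had hbc hbd hcon
      exact hwC a ha b hb hab _ hq hmem
    refine ⟨insert w S, by rw [Finset.card_insert_of_notMem hwS, hS], ?_⟩
    intro a ha b hb c hc d hd hab hcd hac had hbc hbd
    by_cases hab' : w ∈ s(a, b)
    · have hc' : c ∈ S := by
        rcases Finset.mem_insert.1 hc with rfl | h
        · rcases Sym2.mem_iff.1 hab' with h | h <;> exact absurd h.symm ‹_›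
        · exact h
      have hd' : d ∈ S := by
        rcases Finset.mem_insert.1 hd with rfl | h
        · rcases Sym2.mem_iff.1 hab' with h | h <;> exact absurd h.symm ‹_›
        · exact h
      exact (main c hc' d hd' a b hcd hab hac.symm hbc.symm had.symm hbd.symm hab').symm
    · rw [Sym2.mem_iff, not_or] at hab'
      have ha' := (Finset.mem_insert.1 ha).resolve_left (Ne.symm hab'.1)
      have hb' := (Finset.mem_insert.1 hb).resolve_left (Ne.symm hab'.2)
      by_cases hcd' : w ∈ s(c, d)
      · exact main a ha' b hb' c d hab hcd hac had hbc hbd hcd'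
      · rw [Sym2.mem_iff, not_or] at hcd'
        exact hG a ha' b hb' c ((Finset.mem_insert.1 hc).resolve_left (Ne.symm hcd'.1)) d
          ((Finset.mem_insert.1 hd).resolve_left (Ne.symm hcd'.2)) hab hcd hac had hbc hbd

lemma exists_proj (v : unitSphere) : ∃ f : unitSphere → ℂ, ContinuousOn f {v}ᶜ ∧
    Set.InjOn f {v}ᶜ := by
  have : Fact (Module.finrank ℝ (EuclideanSpace ℝ (Fin 3)) = 2 + 1) := ⟨by simp⟩
  let P := stereographic' 2 (E := EuclideanSpace ℝ (Fin 3)) v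
  refine ⟨fun z => Complex.orthonormalBasisOneI.repr.symm (P z), ?_, ?_⟩
  · have h1 : ContinuousOn P {v}ᶜ := by
      have := P.continuousOn
      rwa [show P.source = {v}ᶜ from stereographic'_source v] at this
    exact Complex.orthonormalBasisOneI.repr.symm.continuous.comp_continuousOn h1
  · have h1 : Set.InjOn P {v}ᶜ := by
      have := P.injOn
      rwa [show P.source = {v}ᶜ from stereographic'_source v] at this
    intro a ha b hb hab
    exact h1 ha hb (Complex.orthonormalBasisOneI.repr.symm.injective hab)

lemma exists_emb : ∃ f : ℂ → unitSphere, Continuous f ∧ Function.Injective f := by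
  have : Fact (Module.finrank ℝ (EuclideanSpace ℝ (Fin 3)) = 2 + 1) := ⟨by simp⟩
  let v : unitSphere := ⟨EuclideanSpace.single 0 1, by simp [unitSphere]⟩
  let P := stereographic' 2 (E := EuclideanSpace ℝ (Fin 3)) v
  have hT : P.target = Set.univ := stereographic'_target v
  refine ⟨fun z => P.symm (Complex.orthonormalBasisOneI.repr z), ?_, ?_⟩
  · have h1 : Continuous P.symm := by
      have := P.continuousOn_symm
      rwa [hT, continuousOn_univ] at this
    exact h1.comp Complex.orthonormalBasisOneI.repr.continuous
  · intro a b hab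
    have h1 := P.symm.injOn
    rw [P.symm_source, hT] at h1
    exact Complex.orthonormalBasisOneI.repr.injective (h1 trivial trivial hab)

/-- large complete graphs are not `x`-nearly planar -/
theorem complete_not {n x : ℕ} (hn : 72 * x + 7 ≤ n) :
    ¬ IsNearlyPlanar x (⊤ : SimpleGraph (Fin n)) := by
  rintro ⟨D, hD⟩
  obtain ⟨S, hS, hG⟩ := greedy D hD hn 6 le_rfl
  let v : Fin 6 → Fin n := S.orderEmbOfFin hS
  have hv : Function.Injective v := (S.orderEmbOfFin hS).injective
  have hvS : ∀ i, v i ∈ S := fun i => S.orderEmbOfFin_mem hS i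
  obtain ⟨f, hfc, hfi⟩ := exists_proj (D.vmap (v 5))
  let u : Fin 5 → Fin n := fun i => v i.castSucc
  have hu : Function.Injective u := fun a b h => Fin.castSucc_injective _ (hv h)
  have huS : ∀ i, u i ∈ S := fun i => hvS _
  have hu5 : ∀ i, u i ≠ v 5 := fun i h => by
    have := hv h
    exact absurd this (Fin.castSucc_lt_last i).ne
  have hex : ∀ a b : Fin 5, ∃ g : ℝ → unitSphere, a ≠ b → (Continuous g ∧ g 0 = D.vmap (u a) ∧
      g 1 = D.vmap (u b) ∧ ∀ t, g t ∈ Set.range (D.arc s(u a, u b))) := by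
    intro a b
    by_cases hab : a = b
    · exact ⟨fun _ => D.vmap (u a), fun h => (h hab).elim⟩
    rcases arc_zero_one D (u a) (u b) (hu.ne hab) with h | h
    · refine ⟨fun t => D.arc s(u a, u b) (Set.projIcc 0 1 zero_le_one t), fun _ => ⟨?_, ?_, ?_, ?_⟩⟩
      · exact (D.arc _).continuous.comp continuous_projIcc
      · beta_reduce; rw [Set.projIcc_left]; exact h.1
      · beta_reduce; rw [Set.projIcc_right]; exact h.2
      · exact fun t => ⟨_, rfl⟩
    · refine ⟨fun t => D.arc s(u a, u b) (Set.projIcc 0 1 zero_le_one (1 - t)), fun _ => ⟨?_, ?_, ?_, ?_⟩⟩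
      · exact (D.arc _).continuous.comp (continuous_projIcc.comp (by fun_prop))
      · beta_reduce; rw [sub_zero, Set.projIcc_right]; exact h.2
      · beta_reduce; rw [sub_self, Set.projIcc_left]; exact h.1
      · exact fun t => ⟨_, rfl⟩
  choose g hg using hex
  have hne : ∀ a b, a ≠ b → ∀ t, g a b t ∈ ({D.vmap (v 5)}ᶜ : Set unitSphere) := by
    intro a b hab t h
    have h1 := (hg a b hab).2.2.2 t
    rw [Set.mem_singleton_iff.1 h] at h1
    rcases vertex_on_arc D _ _ (hu.ne hab) _ h1 with h | h
    · exact hu5 _ h.symm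
    · exact hu5 _ h.symm
  have hne' : ∀ a, D.vmap (u a) ∈ ({D.vmap (v 5)}ᶜ : Set unitSphere) :=
    fun a h => hu5 a (D.vmap_inj h)
  refine K5 (fun a => f (D.vmap (u a))) (fun a b t => f (g a b t)) ?_ ?_ ?_ ?_ ?_ ?_
  · intro a b h
    exact hu (D.vmap_inj (hfi (hne' a) (hne' b) h))
  · intro a b hab
    exact hfc.comp_continuous (hg a b hab).1 (hne a b hab)
  · intro a b hab
    simp only [(hg a b hab).2.1]
  · intro a b hab
    simp only [(hg a b hab).2.2.1]
  · intro a b hab w hwa hwb t h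
    have h1 := hfi (hne a b hab t) (hne' w) h
    have h2 := (hg a b hab).2.2.2 t
    rw [h1] at h2
    rcases vertex_on_arc D _ _ (hu.ne hab) _ h2 with h | h
    · exact hwa (hu h)
    · exact hwb (hu h)
  · intro a b c d hab hcd hac had hbc hbd s t h
    have h1 := hfi (hne a b hab s) (hne c d hcd t) h
    refine Set.disjoint_left.1 (hG _ (huS a) _ (huS b) _ (huS c) _ (huS d) (hu.ne hab) (hu.ne hcd)
      (hu.ne hac) (hu.ne had) (hu.ne hbc) (hu.ne hbd)) ((hg a b hab).2.2.2 s) ?_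
    rw [h1]
    exact (hg c d hcd).2.2.2 t

end NPaux

namespace NPaux
open WBW

/-- the straight segment drawn for an unordered pair -/
def seg {V : Type} (p : V → ℂ) (e : Sym2 V) : Set ℂ :=
  Sym2.lift ⟨fun a b => segment ℝ (p a) (p b), fun a b => segment_symm ℝ (p a) (p b)⟩ e

/-- straight-line drawings in which every edge has at most one crossing -/
theorem straight {V : Type} (G : SimpleGraph V) (p : V → ℂ) (hp : Function.Injective p)
    (hav : ∀ a b w, G.Adj a b → p w ∈ segment ℝ (p a) (p b) → w = a ∨ w = b)
    (hcr : ∀ e ∈ G.edgeSet, ∀ e₁ ∈ G.edgeSet, ∀ e₂ ∈ G.edgeSet, e₁ ≠ e → e₂ ≠ e →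
      ∀ z₁ z₂, z₁ ∈ seg p e → z₁ ∈ seg p e₁ → z₁ ∉ Set.range p →
      z₂ ∈ seg p e → z₂ ∈ seg p e₂ → z₂ ∉ Set.range p → e₁ = e₂ ∧ z₁ = z₂)
    (x : ℕ) (hx : 1 ≤ x) : IsNearlyPlanar x G := by
  obtain ⟨f, hf, hfi⟩ := exists_emb
  have hout : ∀ e : Sym2 V, s((Quot.out e).1, (Quot.out e).2) = e := fun e => Quot.out_eq e
  have hadj : ∀ e ∈ G.edgeSet, G.Adj (Quot.out e).1 (Quot.out e).2 := fun e he => by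
    rw [← SimpleGraph.mem_edgeSet, hout]; exact he
  have hseg : ∀ e, seg p e = segment ℝ (p (Quot.out e).1) (p (Quot.out e).2) := fun e => by
    conv_lhs => rw [← hout e]
    rfl
  let l : Sym2 V → ℝ → ℂ := fun e t => AffineMap.lineMap (p (Quot.out e).1) (p (Quot.out e).2) t
  have hlc : ∀ e, Continuous (l e) := fun e => AffineMap.lineMap_continuous
  have hli : ∀ e ∈ G.edgeSet, Function.Injective (l e) := fun e he =>
    AffineMap.lineMap_injective ℝ (hp.ne (hadj e he).ne)
  have hls : ∀ e, ∀ t ∈ Set.Icc (0:ℝ) 1, l e t ∈ seg p e := fun e t ht => by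
    rw [hseg, segment_eq_image_lineMap]; exact ⟨t, ht, rfl⟩
  let D : Drawing G :=
    { vmap := fun v => f (p v)
      vmap_inj := fun a b h => hp (hfi h)
      arc := fun e => ⟨fun t => f (l e t), hf.comp ((hlc e).comp continuous_subtype_val)⟩
      arc_inj := fun e he a b h => Subtype.ext (hli e he (hfi h))
      arc_ends := fun e he => by
        conv_lhs => rw [← hout e]
        simp [l]
      interior_avoids := fun e he t h0 h1 => by
        rintro ⟨w, hw⟩
        have h2 : p w = l e t := hfi hw
        have h3 := hls e t t.2
        rw [← h2, hseg] at h3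
        rcases hav _ _ _ (hadj e he) h3 with h | h
        · apply h0
          apply hli e he
          rw [← h2, h]
          simp [l]
        · apply h1
          apply hli e he
          rw [← h2, h]
          simp [l] }
  refine ⟨D, fun e he => ?_⟩
  have hkey : ∀ q ∈ crossingSet D e, ∃ z, q.2 = f z ∧ z ∈ seg p e ∧ z ∈ seg p q.1 ∧
      z ∉ Set.range p := by
    rintro ⟨e₁, y⟩ ⟨h1, h2, ⟨s, hs⟩, ⟨t, ht⟩, h5⟩
    refine ⟨l e s, hs.symm, hls e s s.2, ?_, ?_⟩
    · have : l e s = l e₁ t := hfi (hs.trans ht.symm)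
      rw [this]; exact hls e₁ t t.2
    · rintro ⟨w, hw⟩
      apply h5
      refine ⟨w, ?_⟩
      rw [← hs]
      change f (p w) = f (l e s)
      rw [hw]
  have hsub : (crossingSet D e).Subsingleton := by
    intro q hq q' hq'
    obtain ⟨z, hz1, hz2, hz3, hz4⟩ := hkey q hq
    obtain ⟨z', hz1', hz2', hz3', hz4'⟩ := hkey q' hq'
    obtain ⟨h1, h2⟩ := hcr e he q.1 hq.1 q'.1 hq'.1 hq.2.1 hq'.2.1 z z' hz2 hz3 hz4 hz2' hz3' hz4'
    exact Prod.ext h1 (by rw [hz1, hz1', h2])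
  exact ⟨hsub.finite, ((Set.ncard_le_one hsub.finite).2 fun a ha b hb => hsub ha hb).trans hx⟩

/-- vertices of the host graph: horizontal strands, vertical strands, hubs -/
inductive Vx (n : ℕ) : Type
  | h (r c : Fin (n * n)) : Vx n
  | v (r c : Fin (n * n)) : Vx n
  | hub (i : Fin n) : Vx n

instance (n : ℕ) : Finite (Vx n) := by
  let F : Vx n → (Fin (n * n) × Fin (n * n)) ⊕ (Fin (n * n) × Fin (n * n)) ⊕ Fin n := fun w =>
    match w with
    | .h r c => Sum.inl (r, c)
    | .v r c => Sum.inr (Sum.inl (r, c))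
    | .hub i => Sum.inr (Sum.inr i)
  refine Finite.of_injective F ?_
  intro a b hab
  cases a <;> cases b <;> simp_all [F]

/-- oriented edges of the host graph -/
inductive Rl (n : ℕ) : Vx n → Vx n → Prop
  | H (r c c' : Fin (n * n)) (hc : c.val + 1 = c'.val) : Rl n (.h r c) (.h r c')
  | V (r r' c : Fin (n * n)) (hr : r.val + 1 = r'.val) : Rl n (.v r c) (.v r' c)
  | D (r c : Fin (n * n)) : Rl n (.h r c) (.v r c)
  | U (i : Fin n) (r c : Fin (n * n)) (hr : r.val = 0) (hc : n * i.val ≤ c.val)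
      (hc' : c.val < n * i.val + n) : Rl n (.hub i) (.v r c)

/-- the host graph -/
def host (n : ℕ) : SimpleGraph (Vx n) := SimpleGraph.fromRel (Rl n)

lemma Rl.ne {n : ℕ} {a b : Vx n} (h : Rl n a b) : a ≠ b := by
  cases h with
  | H r c c' hc => intro h; cases h; omega
  | V r c c' hc => intro h; cases h; omega
  | D => simp
  | U => simp

lemma Rl.adj {n : ℕ} {a b : Vx n} (h : Rl n a b) : (host n).Adj a b := ⟨h.ne, Or.inl h⟩

lemma host_adj {n : ℕ} {a b : Vx n} (h : (host n).Adj a b) : Rl n a b ∨ Rl n b a := h.2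

lemma host_edge {n : ℕ} {e : Sym2 (Vx n)} (h : e ∈ (host n).edgeSet) :
    ∃ a b, e = s(a, b) ∧ Rl n a b := by
  induction e with
  | _ a b =>
    rcases host_adj h with h | h
    · exact ⟨a, b, rfl, h⟩
    · exact ⟨b, a, Sym2.eq_swap, h⟩

/-- positions in the plane -/
def pos (n : ℕ) : Vx n → ℂ
  | .h r c => ⟨4 * (c.val : ℝ), 4 * (r.val : ℝ)⟩
  | .v r c => ⟨4 * (c.val : ℝ) + 1, 4 * (r.val : ℝ) - 1⟩
  | .hub i => ⟨4 * (n * i.val : ℕ) + 1, -5⟩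

lemma pos_inj (n : ℕ) : Function.Injective (pos n) := by
  intro a b hab
  have h1 := congrArg Complex.re hab
  have h2 := congrArg Complex.im hab
  cases a with
  | h r c => cases b with
    | h r' c' =>
      simp only [pos] at h1 h2
      have e1 : c = c' := Fin.ext (by exact_mod_cast (by linarith : (c.val : ℝ) = c'.val))
      have e2 : r = r' := Fin.ext (by exact_mod_cast (by linarith : (r.val : ℝ) = r'.val))
      rw [e1, e2]
    | v r' c' =>
      simp only [pos] at h1 h2
      have : 4 * c.val = 4 * c'.val + 1 := by exact_mod_cast h1
      omega
    | hub i =>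
      simp only [pos] at h1 h2
      have : 4 * c.val = 4 * (n * i.val) + 1 := by exact_mod_cast h1
      omega
  | v r c => cases b with
    | h r' c' =>
      simp only [pos] at h1 h2
      have : 4 * c.val + 1 = 4 * c'.val := by exact_mod_cast h1
      omega
    | v r' c' =>
      simp only [pos] at h1 h2
      have e1 : c = c' := Fin.ext (by exact_mod_cast (by linarith : (c.val : ℝ) = c'.val))
      have e2 : r = r' := Fin.ext (by exact_mod_cast (by linarith : (r.val : ℝ) = r'.val))
      rw [e1, e2]
    | hub i =>
      simp only [pos] at h1 h2
      have : (0:ℝ) ≤ r.val := by positivity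
      linarith
  | hub i => cases b with
    | h r' c' =>
      simp only [pos] at h1 h2
      have : 4 * (n * i.val) + 1 = 4 * c'.val := by exact_mod_cast h1
      omega
    | v r' c' =>
      simp only [pos] at h1 h2
      have : (0:ℝ) ≤ r'.val := by positivity
      linarith
    | hub j =>
      simp only [pos] at h1 h2
      have : n * i.val = n * j.val := by
        exact_mod_cast (by linarith : ((n * i.val : ℕ) : ℝ) = (n * j.val : ℕ))
      have : i = j := Fin.ext (Nat.eq_of_mul_eq_mul_left i.pos this)
      rw [this]

lemma seg_param {a b z : ℂ} (h : z ∈ segment ℝ a b) :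
    ∃ t : ℝ, 0 ≤ t ∧ t ≤ 1 ∧ z.re = a.re + t * (b.re - a.re) ∧ z.im = a.im + t * (b.im - a.im) := by
  rw [segment_eq_image'] at h
  obtain ⟨t, ⟨h0, h1⟩, rfl⟩ := h
  exact ⟨t, h0, h1, by simp, by simp⟩

lemma seg_H {n : ℕ} {r c c' : Fin (n * n)} (hc : c.val + 1 = c'.val) {z : ℂ}
    (h : z ∈ segment ℝ (pos n (.h r c)) (pos n (.h r c'))) :
    z.im = 4 * (r.val : ℝ) ∧ 4 * (c.val : ℝ) ≤ z.re ∧ z.re ≤ 4 * (c.val : ℝ) + 4 := by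
  obtain ⟨t, h0, h1, h2, h3⟩ := seg_param h
  have : (c'.val : ℝ) = c.val + 1 := by exact_mod_cast hc.symm
  simp only [pos, this] at h2 h3
  refine ⟨?_, ?_, ?_⟩ <;> linarith

lemma seg_V {n : ℕ} {r r' c : Fin (n * n)} (hc : r.val + 1 = r'.val) {z : ℂ}
    (h : z ∈ segment ℝ (pos n (.v r c)) (pos n (.v r' c))) :
    z.re = 4 * (c.val : ℝ) + 1 ∧ 4 * (r.val : ℝ) - 1 ≤ z.im ∧ z.im ≤ 4 * (r.val : ℝ) + 3 := by
  obtain ⟨t, h0, h1, h2, h3⟩ := seg_param h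
  have : (r'.val : ℝ) = r.val + 1 := by exact_mod_cast hc.symm
  simp only [pos, this] at h2 h3
  refine ⟨?_, ?_, ?_⟩ <;> linarith

lemma seg_D {n : ℕ} {r c : Fin (n * n)} {z : ℂ}
    (h : z ∈ segment ℝ (pos n (.h r c)) (pos n (.v r c))) :
    z.re - 4 * (c.val : ℝ) = 4 * (r.val : ℝ) - z.im ∧ 4 * (c.val : ℝ) ≤ z.re ∧
      z.re ≤ 4 * (c.val : ℝ) + 1 := by
  obtain ⟨t, h0, h1, h2, h3⟩ := seg_param h
  simp only [pos] at h2 h3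
  refine ⟨?_, ?_, ?_⟩ <;> linarith

lemma seg_U {n : ℕ} {i : Fin n} {r c : Fin (n * n)} (hr : r.val = 0) (hc : n * i.val ≤ c.val)
    {z : ℂ} (h : z ∈ segment ℝ (pos n (.hub i)) (pos n (.v r c))) :
    z.re - (4 * ((n * i.val : ℕ) : ℝ) + 1) = (z.im + 5) * ((c.val : ℝ) - (n * i.val : ℕ)) ∧
      -5 ≤ z.im ∧ z.im ≤ -1 ∧ 4 * ((n * i.val : ℕ) : ℝ) + 1 ≤ z.re ∧
      z.re ≤ 4 * (c.val : ℝ) + 1 := by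
  obtain ⟨t, h0, h1, h2, h3⟩ := seg_param h
  have hc2 : ((n * i.val : ℕ) : ℝ) ≤ c.val := by exact_mod_cast hc
  simp only [pos, hr] at h2 h3
  generalize ((n * i.val : ℕ) : ℝ) = m at *
  generalize (c.val : ℝ) = d at *
  simp only [Nat.cast_zero] at h3
  refine ⟨?_, by linarith, by linarith, ?_, ?_⟩
  · have : z.im = -5 + 4 * t := by linarith
    rw [this, h2]; ring
  · nlinarith
  · nlinarith

/-- no vertex lies inside a segment -/
lemma avoid {n : ℕ} {a b w : Vx n} (hab : Rl n a b)
    (hw : pos n w ∈ segment ℝ (pos n a) (pos n b)) : w = a ∨ w = b := by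
  cases hab with
  | H r c c' hc =>
    obtain ⟨h1, h2, h3⟩ := seg_H hc hw
    cases w with
    | h r₁ c₁ =>
      simp only [pos] at h1 h2 h3
      norm_cast at h1 h2 h3
      simp only [Vx.h.injEq, Fin.ext_iff]; omega
    | v r₁ c₁ =>
      simp only [pos] at h1
      have : 4 * r₁.val = 4 * r.val + 1 := by
        exact_mod_cast (by linarith : 4 * (r₁.val : ℝ) = 4 * r.val + 1)
      omega
    | hub i =>
      simp only [pos] at h1
      have : (0:ℝ) ≤ r.val := by positivity
      linarith
  | V r r' c hc =>
    obtain ⟨h1, h2, h3⟩ := seg_V hc hw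
    cases w with
    | h r₁ c₁ =>
      simp only [pos] at h1 h2 h3
      norm_cast at h1
      omega
    | v r₁ c₁ =>
      simp only [pos] at h1 h2 h3
      have h2 : 4 * (r.val : ℝ) ≤ 4 * r₁.val := by linarith
      have h3 : 4 * (r₁.val : ℝ) ≤ 4 * r.val + 4 := by linarith
      norm_cast at h1 h2 h3
      simp only [Vx.v.injEq, Fin.ext_iff]; omega
    | hub i =>
      simp only [pos] at h2
      have : (0:ℝ) ≤ r.val := by positivity
      linarith
  | D r c =>
    obtain ⟨h1, h2, h3⟩ := seg_D hw
    cases w with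
    | h r₁ c₁ =>
      simp only [pos] at h1 h2 h3
      have h1 : 4 * (c₁.val : ℝ) + 4 * r₁.val = 4 * c.val + 4 * r.val := by linarith
      norm_cast at h1 h2 h3
      simp only [Vx.h.injEq, Fin.ext_iff]; omega
    | v r₁ c₁ =>
      simp only [pos] at h1 h2 h3
      have h1 : 4 * (c₁.val : ℝ) + 4 * r₁.val = 4 * c.val + 4 * r.val := by linarith
      norm_cast at h1 h2 h3
      simp only [Vx.v.injEq, Fin.ext_iff, reduceCtorEq, false_or]; omega
    | hub i =>
      simp only [pos] at h1 h2 h3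
      have : (0:ℝ) ≤ r.val := by positivity
      linarith
  | U i r c hr hc hc' =>
    obtain ⟨h1, h2, h3, h4, h5⟩ := seg_U hr hc hw
    cases w with
    | h r₁ c₁ =>
      simp only [pos] at h3
      have : (0:ℝ) ≤ r₁.val := by positivity
      linarith
    | v r₁ c₁ =>
      simp only [pos] at h1 h2 h3
      have h3 : 4 * (r₁.val : ℝ) ≤ 0 := by linarith
      have h6 : r₁.val = 0 := by
        have : (0:ℝ) ≤ r₁.val := by positivity
        exact_mod_cast (by linarith : (r₁.val : ℝ) = 0)
      rw [h6] at h1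
      simp only [Nat.cast_zero] at h1
      have h7 : c₁.val = c.val := by
        exact_mod_cast (by linarith : (c₁.val : ℝ) = c.val)
      right
      simp only [Vx.v.injEq, Fin.ext_iff]; omega
    | hub j =>
      simp only [pos] at h1
      left
      apply pos_inj
      apply Complex.ext
      · simp only [pos]; linarith
      · simp only [pos]

/-- the only crossings are between `H r c` and `V r c` -/
lemma cross {n : ℕ} {a b a' b' : Vx n} (hab : Rl n a b) (hab' : Rl n a' b')
    (hne : s(a, b) ≠ s(a', b')) {z : ℂ} (h : z ∈ segment ℝ (pos n a) (pos n b))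
    (h' : z ∈ segment ℝ (pos n a') (pos n b')) (hz : z ∉ Set.range (pos n)) :
    ∃ r c : Fin (n * n), z = ⟨4 * (c.val : ℝ) + 1, 4 * (r.val : ℝ)⟩ ∧
      ((a = .h r c ∧ a' = .v r c) ∨ (a = .v r c ∧ a' = .h r c)) := by
  have zh : ∀ r c : Fin (n * n), ¬ (z.re = 4 * (c.val : ℝ) ∧ z.im = 4 * (r.val : ℝ)) :=
    fun r c hh => hz ⟨.h r c, (Complex.ext hh.1 hh.2).symm⟩
  have zv : ∀ r c : Fin (n * n), ¬ (z.re = 4 * (c.val : ℝ) + 1 ∧ z.im = 4 * (r.val : ℝ) - 1) :=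
    fun r c hh => hz ⟨.v r c, (Complex.ext hh.1 hh.2).symm⟩
  have zu : ∀ i : Fin n, ¬ (z.re = 4 * ((n * i.val : ℕ) : ℝ) + 1 ∧ z.im = -5) :=
    fun i hh => hz ⟨.hub i, (Complex.ext hh.1 hh.2).symm⟩
  have nn : ∀ m : ℕ, (0:ℝ) ≤ m := fun m => Nat.cast_nonneg m
  have HH : ∀ r c c' r₁ c₁ c₁' : Fin (n * n), c.val + 1 = c'.val → c₁.val + 1 = c₁'.val →
      s(Vx.h r c, Vx.h r c') ≠ s(Vx.h r₁ c₁, Vx.h r₁ c₁') →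
      z ∈ segment ℝ (pos n (.h r c)) (pos n (.h r c')) →
      z ∈ segment ℝ (pos n (.h r₁ c₁)) (pos n (.h r₁ c₁')) → c.val ≤ c₁.val → False := by
    intro r c c' r₁ c₁ c₁' hc hc₁ hne h h' hle
    obtain ⟨h1, h2, h3⟩ := seg_H hc h
    obtain ⟨k1, k2, k3⟩ := seg_H hc₁ h'
    have e1 : r = r₁ := Fin.ext (by exact_mod_cast (by linarith : (r.val : ℝ) = r₁.val))
    subst e1
    rcases hle.lt_or_eq with hlt | heq
    · have : (c.val : ℝ) + 1 ≤ c₁.val := by exact_mod_cast hlt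
      exact zh r c₁ ⟨by linarith, k1⟩
    · have e2 : c = c₁ := Fin.ext heq
      have e3 : c' = c₁' := Fin.ext (by omega)
      exact hne (by rw [e2, e3])
  have VV : ∀ r r' c r₁ r₁' c₁ : Fin (n * n), r.val + 1 = r'.val → r₁.val + 1 = r₁'.val →
      s(Vx.v r c, Vx.v r' c) ≠ s(Vx.v r₁ c₁, Vx.v r₁' c₁) →
      z ∈ segment ℝ (pos n (.v r c)) (pos n (.v r' c)) →
      z ∈ segment ℝ (pos n (.v r₁ c₁)) (pos n (.v r₁' c₁)) → r.val ≤ r₁.val → False := by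
    intro r r' c r₁ r₁' c₁ hc hc₁ hne h h' hle
    obtain ⟨h1, h2, h3⟩ := seg_V hc h
    obtain ⟨k1, k2, k3⟩ := seg_V hc₁ h'
    have e1 : c = c₁ := Fin.ext (by exact_mod_cast (by linarith : (c.val : ℝ) = c₁.val))
    subst e1
    rcases hle.lt_or_eq with hlt | heq
    · have : (r.val : ℝ) + 1 ≤ r₁.val := by exact_mod_cast hlt
      exact zv r₁ c ⟨k1, by linarith⟩
    · have e2 : r = r₁ := Fin.ext heq
      have e3 : r' = r₁' := Fin.ext (by omega)
      exact hne (by rw [e2, e3])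
  have HV : ∀ r c c' r₁ r₁' c₁ : Fin (n * n), c.val + 1 = c'.val → r₁.val + 1 = r₁'.val →
      z ∈ segment ℝ (pos n (.h r c)) (pos n (.h r c')) →
      z ∈ segment ℝ (pos n (.v r₁ c₁)) (pos n (.v r₁' c₁)) →
      r = r₁ ∧ c = c₁ ∧ z = ⟨4 * (c.val : ℝ) + 1, 4 * (r.val : ℝ)⟩ := by
    intro r c c' r₁ r₁' c₁ hc hc₁ h h'
    obtain ⟨h1, h2, h3⟩ := seg_H hc h
    obtain ⟨k1, k2, k3⟩ := seg_V hc₁ h'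
    rw [k1] at h2 h3
    have k2' : 4 * (r₁.val : ℝ) ≤ 4 * r.val + 1 := by linarith
    rw [h1] at k3
    norm_cast at h2 h3 k2' k3
    have e1 : c = c₁ := Fin.ext (by omega)
    have e2 : r = r₁ := Fin.ext (by omega)
    subst e1 e2
    exact ⟨rfl, rfl, Complex.ext k1 h1⟩
  have HD : ∀ r c c' r₁ c₁ : Fin (n * n), c.val + 1 = c'.val →
      z ∈ segment ℝ (pos n (.h r c)) (pos n (.h r c')) →
      z ∈ segment ℝ (pos n (.h r₁ c₁)) (pos n (.v r₁ c₁)) → False := by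
    intro r c c' r₁ c₁ hc h h'
    obtain ⟨h1, h2, h3⟩ := seg_H hc h
    obtain ⟨k1, k2, k3⟩ := seg_D h'
    have e1 : 4 * (r.val : ℝ) ≤ 4 * r₁.val := by linarith
    have e2 : 4 * (r₁.val : ℝ) ≤ 4 * r.val + 1 := by linarith
    norm_cast at e1 e2
    have e : r = r₁ := Fin.ext (by omega)
    subst e
    exact zh r c₁ ⟨by linarith, h1⟩
  have HU : ∀ (r c c' : Fin (n * n)) (i : Fin n) (r₁ c₁ : Fin (n * n)), c.val + 1 = c'.val →
      r₁.val = 0 → n * i.val ≤ c₁.val →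
      z ∈ segment ℝ (pos n (.h r c)) (pos n (.h r c')) →
      z ∈ segment ℝ (pos n (.hub i)) (pos n (.v r₁ c₁)) → False := by
    intro r c c' i r₁ c₁ hc hr hi h h'
    obtain ⟨h1, h2, h3⟩ := seg_H hc h
    obtain ⟨k1, k2, k3, k4, k5⟩ := seg_U hr hi h'
    linarith [nn r.val]
  have VD : ∀ r r' c r₁ c₁ : Fin (n * n), r.val + 1 = r'.val →
      z ∈ segment ℝ (pos n (.v r c)) (pos n (.v r' c)) →
      z ∈ segment ℝ (pos n (.h r₁ c₁)) (pos n (.v r₁ c₁)) → False := by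
    intro r r' c r₁ c₁ hc h h'
    obtain ⟨h1, h2, h3⟩ := seg_V hc h
    obtain ⟨k1, k2, k3⟩ := seg_D h'
    rw [h1] at k2 k3
    norm_cast at k2 k3
    have e : c = c₁ := Fin.ext (by omega)
    subst e
    exact zv r₁ c ⟨h1, by linarith⟩
  have topU : ∀ (i : Fin n) (r₁ c₁ : Fin (n * n)), r₁.val = 0 → n * i.val ≤ c₁.val →
      z ∈ segment ℝ (pos n (.hub i)) (pos n (.v r₁ c₁)) → -1 ≤ z.im → False := by
    intro i r₁ c₁ hr hi h' hle
    obtain ⟨k1, k2, k3, k4, k5⟩ := seg_U hr hi h'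
    have : z.im = -1 := le_antisymm k3 hle
    rw [this] at k1
    refine zv r₁ c₁ ⟨by linarith, ?_⟩
    rw [hr, this]; simp
  have VU : ∀ (r r' c : Fin (n * n)) (i : Fin n) (r₁ c₁ : Fin (n * n)), r.val + 1 = r'.val →
      r₁.val = 0 → n * i.val ≤ c₁.val →
      z ∈ segment ℝ (pos n (.v r c)) (pos n (.v r' c)) →
      z ∈ segment ℝ (pos n (.hub i)) (pos n (.v r₁ c₁)) → False := by
    intro r r' c i r₁ c₁ hc hr hi h h'
    obtain ⟨h1, h2, h3⟩ := seg_V hc h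
    exact topU i r₁ c₁ hr hi h' (by linarith [nn r.val])
  have DU : ∀ (r c : Fin (n * n)) (i : Fin n) (r₁ c₁ : Fin (n * n)),
      r₁.val = 0 → n * i.val ≤ c₁.val →
      z ∈ segment ℝ (pos n (.h r c)) (pos n (.v r c)) →
      z ∈ segment ℝ (pos n (.hub i)) (pos n (.v r₁ c₁)) → False := by
    intro r c i r₁ c₁ hr hi h h'
    obtain ⟨h1, h2, h3⟩ := seg_D h
    exact topU i r₁ c₁ hr hi h' (by linarith [nn r.val])
  have UU : ∀ (i : Fin n) (r c : Fin (n * n)) (i₁ : Fin n) (r₁ c₁ : Fin (n * n)),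
      r.val = 0 → n * i.val ≤ c.val → c.val < n * i.val + n →
      r₁.val = 0 → n * i₁.val ≤ c₁.val →
      s(Vx.hub i, Vx.v r c) ≠ s(Vx.hub i₁, Vx.v r₁ c₁) →
      z ∈ segment ℝ (pos n (.hub i)) (pos n (.v r c)) →
      z ∈ segment ℝ (pos n (.hub i₁)) (pos n (.v r₁ c₁)) → i.val ≤ i₁.val → False := by
    intro i r c i₁ r₁ c₁ hr hi hi' hr₁ hi₁ hne h h' hle
    obtain ⟨h1, h2, h3, h4, h5⟩ := seg_U hr hi h
    obtain ⟨k1, k2, k3, k4, k5⟩ := seg_U hr₁ hi₁ h'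
    rcases hle.lt_or_eq with hlt | heq
    · have h6 : n * i.val + n ≤ n * i₁.val := by
        calc n * i.val + n = n * (i.val + 1) := by ring
          _ ≤ _ := Nat.mul_le_mul_left _ hlt
      have h7 : (c.val : ℝ) + 1 ≤ ((n * i₁.val : ℕ) : ℝ) := by exact_mod_cast (by omega)
      linarith
    · have e1 : i = i₁ := Fin.ext heq
      subst e1
      have h6 : (z.im + 5) * ((c.val : ℝ) - c₁.val) = 0 := by linarith
      rcases mul_eq_zero.1 h6 with h7 | h7
      · rw [h7] at h1
        exact zu i ⟨by linarith, by linarith⟩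
      · have e2 : c = c₁ := Fin.ext (by exact_mod_cast (by linarith : (c.val : ℝ) = c₁.val))
        have e3 : r = r₁ := Fin.ext (by omega)
        exact hne (by rw [e2, e3])
  cases hab with
  | H r c c' hc => cases hab' with
    | H r₁ c₁ c₁' hc₁ =>
      rcases le_total c.val c₁.val with hle | hle
      · exact (HH _ _ _ _ _ _ hc hc₁ hne h h' hle).elim
      · exact (HH _ _ _ _ _ _ hc₁ hc hne.symm h' h hle).elim
    | V r₁ r₁' c₁ hr₁ =>
      obtain ⟨rfl, rfl, hzz⟩ := HV _ _ _ _ _ _ hc hr₁ h h'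
      exact ⟨r, c, hzz, Or.inl ⟨rfl, rfl⟩⟩
    | D r₁ c₁ => exact (HD _ _ _ _ _ hc h h').elim
    | U i r₁ c₁ hr₁ hi hi' => exact (HU _ _ _ _ _ _ hc hr₁ hi h h').elim
  | V r r' c hr => cases hab' with
    | H r₁ c₁ c₁' hc₁ =>
      obtain ⟨rfl, rfl, hzz⟩ := HV _ _ _ _ _ _ hc₁ hr h' h
      exact ⟨_, _, hzz, Or.inr ⟨rfl, rfl⟩⟩
    | V r₁ r₁' c₁ hr₁ =>
      rcases le_total r.val r₁.val with hle | hle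
      · exact (VV _ _ _ _ _ _ hr hr₁ hne h h' hle).elim
      · exact (VV _ _ _ _ _ _ hr₁ hr hne.symm h' h hle).elim
    | D r₁ c₁ => exact (VD _ _ _ _ _ hr h h').elim
    | U i r₁ c₁ hr₁ hi hi' => exact (VU _ _ _ _ _ _ hr hr₁ hi h h').elim
  | D r c => cases hab' with
    | H r₁ c₁ c₁' hc₁ => exact (HD _ _ _ _ _ hc₁ h' h).elim
    | V r₁ r₁' c₁ hr₁ => exact (VD _ _ _ _ _ hr₁ h' h).elim
    | D r₁ c₁ =>
      obtain ⟨h1, h2, h3⟩ := seg_D h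
      obtain ⟨k1, k2, k3⟩ := seg_D h'
      have e1 : 4 * (c.val : ℝ) ≤ 4 * c₁.val + 1 := by linarith
      have e2 : 4 * (c₁.val : ℝ) ≤ 4 * c.val + 1 := by linarith
      have e3 : 4 * (r.val : ℝ) ≤ 4 * r₁.val + 1 := by linarith
      have e4 : 4 * (r₁.val : ℝ) ≤ 4 * r.val + 1 := by linarith
      norm_cast at e1 e2 e3 e4
      have e5 : c = c₁ := Fin.ext (by omega)
      have e6 : r = r₁ := Fin.ext (by omega)
      exact (hne (by rw [e5, e6])).elim
    | U i r₁ c₁ hr₁ hi hi' => exact (DU _ _ _ _ _ hr₁ hi h h').elim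
  | U i r c hr hi hi' => cases hab' with
    | H r₁ c₁ c₁' hc₁ => exact (HU _ _ _ _ _ _ hc₁ hr hi h' h).elim
    | V r₁ r₁' c₁ hr₁ => exact (VU _ _ _ _ _ _ hr₁ hr hi h' h).elim
    | D r₁ c₁ => exact (DU _ _ _ _ _ hr hi h' h).elim
    | U i₁ r₁ c₁ hr₁ hi₁ hi₁' =>
      rcases le_total i.val i₁.val with hle | hle
      · exact (UU _ _ _ _ _ _ hr hi hi' hr₁ hi₁ hne h h' hle).elim
      · exact (UU _ _ _ _ _ _ hr₁ hi₁ hi₁' hr hi hne.symm h' h hle).elim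

lemma Rl.h_unique {n : ℕ} {r c : Fin (n * n)} {d d' : Vx n} {z z' : ℂ}
    (hd : Rl n (.h r c) d) (hd' : Rl n (.h r c) d')
    (hz : z ∈ segment ℝ (pos n (.h r c)) (pos n d)) (hz' : z' ∈ segment ℝ (pos n (.h r c)) (pos n d'))
    (hzz : z = ⟨4 * (c.val : ℝ) + 1, 4 * (r.val : ℝ)⟩)
    (hzz' : z' = ⟨4 * (c.val : ℝ) + 1, 4 * (r.val : ℝ)⟩) : d = d' := by
  have key : ∀ {d z}, Rl n (.h r c) d → z ∈ segment ℝ (pos n (.h r c)) (pos n d) →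
      z = ⟨4 * (c.val : ℝ) + 1, 4 * (r.val : ℝ)⟩ →
      ∃ c' : Fin (n * n), c.val + 1 = c'.val ∧ d = .h r c' := by
    intro d z hd hz hzz
    cases hd with
    | H _ _ c' hc => exact ⟨c', hc, rfl⟩
    | D =>
      obtain ⟨h1, -, -⟩ := seg_D hz
      rw [hzz] at h1
      simp at h1
  obtain ⟨c₁, h1, rfl⟩ := key hd hz hzz
  obtain ⟨c₂, h2, rfl⟩ := key hd' hz' hzz'
  rw [show c₁ = c₂ from Fin.ext (by omega)]

lemma Rl.v_unique {n : ℕ} {r c : Fin (n * n)} {d d' : Vx n}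
    (hd : Rl n (.v r c) d) (hd' : Rl n (.v r c) d') : d = d' := by
  cases hd with
  | V _ r₁ _ h1 => cases hd' with
    | V _ r₂ _ h2 => rw [show r₁ = r₂ from Fin.ext (by omega)]

theorem host_near (n x : ℕ) (hx : 1 ≤ x) : IsNearlyPlanar x (host n) := by
  refine straight (host n) (pos n) (pos_inj n) ?_ ?_ x hx
  · intro a b w hab hw
    rcases host_adj hab with h | h
    · exact avoid h hw
    · rw [segment_symm] at hw
      exact (avoid h hw).symm
  · intro e he e₁ he₁ e₂ he₂ hne₁ hne₂ z₁ z₂ h1 h2 h3 h4 h5 h6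
    obtain ⟨a, b, rfl, hab⟩ := host_edge he
    obtain ⟨a₁, b₁, rfl, hab₁⟩ := host_edge he₁
    obtain ⟨a₂, b₂, rfl, hab₂⟩ := host_edge he₂
    obtain ⟨r, c, hz, hh⟩ := cross hab hab₁ hne₁.symm h1 h2 h3
    obtain ⟨r', c', hz', hh'⟩ := cross hab hab₂ hne₂.symm h4 h5 h6
    rcases hh with ⟨rfl, rfl⟩ | ⟨rfl, rfl⟩
    · rcases hh' with ⟨hr, rfl⟩ | ⟨hr, rfl⟩
      · cases hr
        exact ⟨by rw [Rl.v_unique hab₁ hab₂], hz.trans hz'.symm⟩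
      · cases hr
    · rcases hh' with ⟨hr, rfl⟩ | ⟨hr, rfl⟩
      · cases hr
      · cases hr
        exact ⟨by rw [Rl.h_unique hab₁ hab₂ h2 h5 hz hz'], hz.trans hz'.symm⟩

end NPaux

namespace NPaux
open WBW

/-- whole columns are connected inside any vertex set containing them -/
lemma col_reach {n : ℕ} (S : Set (Vx n)) (c : Fin (n * n)) (hS : ∀ r, Vx.v r c ∈ S)
    (r r' : Fin (n * n)) :
    ((host n).induce S).Reachable ⟨.v r c, hS r⟩ ⟨.v r' c, hS r'⟩ := by
  have key : ∀ k (hk : k < n * n), ((host n).induce S).Reachable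
      ⟨.v ⟨0, by omega⟩ c, hS _⟩ ⟨.v ⟨k, hk⟩ c, hS _⟩ := by
    intro k
    induction k with
    | zero => intro _; exact SimpleGraph.Reachable.refl _
    | succ k ih =>
      intro hk
      refine (ih (by omega)).trans (SimpleGraph.Adj.reachable ?_)
      exact (Rl.V ⟨k, by omega⟩ ⟨k + 1, hk⟩ c rfl).adj
  exact (key r.val r.2).symm.trans (key r'.val r'.2)

lemma row_reach {n : ℕ} (S : Set (Vx n)) (r : Fin (n * n)) (hS : ∀ c, Vx.h r c ∈ S)
    (c c' : Fin (n * n)) :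
    ((host n).induce S).Reachable ⟨.h r c, hS c⟩ ⟨.h r c', hS c'⟩ := by
  have key : ∀ k (hk : k < n * n), ((host n).induce S).Reachable
      ⟨.h r ⟨0, by omega⟩, hS _⟩ ⟨.h r ⟨k, hk⟩, hS _⟩ := by
    intro k
    induction k with
    | zero => intro _; exact SimpleGraph.Reachable.refl _
    | succ k ih =>
      intro hk
      refine (ih (by omega)).trans (SimpleGraph.Adj.reachable ?_)
      exact (Rl.H r ⟨k, by omega⟩ ⟨k + 1, hk⟩ rfl).adj
  exact (key c.val c.2).symm.trans (key c'.val c'.2)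

lemma diag_reach {n : ℕ} (S : Set (Vx n)) (r c : Fin (n * n)) (h1 : Vx.h r c ∈ S)
    (h2 : Vx.v r c ∈ S) : ((host n).induce S).Reachable ⟨.h r c, h1⟩ ⟨.v r c, h2⟩ :=
  SimpleGraph.Adj.reachable (show (host n).Adj _ _ from (Rl.D r c).adj)

/-- index of an ordered pair -/
def ix {n : ℕ} (i j : Fin n) : Fin (n * n) := finProdFinEquiv (i, j)

lemma ix_inj {n : ℕ} {i j i' j' : Fin n} (h : ix i j = ix i' j') : i = i' ∧ j = j' := by
  have := finProdFinEquiv.injective h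
  exact ⟨congrArg Prod.fst this, congrArg Prod.snd this⟩

lemma ix_val {n : ℕ} (i j : Fin n) : (ix i j).val = j.val + n * i.val := rfl

lemma hub_reach {n : ℕ} (S : Set (Vx n)) (i j : Fin n) (h1 : Vx.hub i ∈ S)
    (hS : ∀ r, Vx.v r (ix i j) ∈ S) (r : Fin (n * n)) :
    ((host n).induce S).Reachable ⟨.hub i, h1⟩ ⟨.v r (ix i j), hS r⟩ := by
  have h0 : 0 < n * n := r.pos
  refine SimpleGraph.Reachable.trans (SimpleGraph.Adj.reachable ?_)
    (col_reach S (ix i j) hS ⟨0, h0⟩ r)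
  refine (Rl.U i ⟨0, h0⟩ (ix i j) rfl ?_ ?_).adj
  · rw [ix_val]; omega
  · rw [ix_val]; omega

/-- the vertices available to the path for the edge `ij` -/
def strand {n : ℕ} (i j : Fin n) : Set (Vx n) := fun w =>
  match w with
  | .h r _ => r = ix (min i j) (max i j)
  | .v _ c => c = ix i j ∨ c = ix j i
  | .hub k => k = i ∨ k = j

lemma strand_walk {n : ℕ} (i j : Fin n) : ∃ p : (host n).Walk (.hub i) (.hub j),
    p.IsPath ∧ ∀ w ∈ p.support, w ∈ strand i j := by
  classical
  have hi : Vx.hub i ∈ strand i j := Or.inl rfl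
  have hj : Vx.hub j ∈ strand i j := Or.inr rfl
  have h1 : ∀ r, Vx.v r (ix i j) ∈ strand i j := fun r => Or.inl rfl
  have h2 : ∀ r, Vx.v r (ix j i) ∈ strand i j := fun r => Or.inr rfl
  have h3 : ∀ c, Vx.h (ix (min i j) (max i j)) c ∈ strand i j := fun c => rfl
  have hr : ((host n).induce (strand i j)).Reachable ⟨.hub i, hi⟩ ⟨.hub j, hj⟩ :=
    (hub_reach _ i j hi h1 (ix (min i j) (max i j))).trans
    ((diag_reach _ _ _ (h3 _) (h1 _)).symm.trans
    ((row_reach _ _ h3 (ix i j) (ix j i)).trans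
    ((diag_reach _ _ _ (h3 _) (h2 _)).trans
    (hub_reach _ j i hj h2 (ix (min i j) (max i j))).symm)))
  obtain ⟨q⟩ := hr
  let q' : (host n).Walk (.hub i) (.hub j) := q.map (SimpleGraph.Embedding.induce (strand i j)).toHom
  refine ⟨q'.toPath, q'.toPath.2, fun w hw => ?_⟩
  have := SimpleGraph.Walk.support_toPath_subset_support q' hw
  rw [show q'.support = q.support.map _ from SimpleGraph.Walk.support_map _ q] at this
  obtain ⟨u, -, rfl⟩ := List.mem_map.1 this
  exact u.2

theorem host_topMinor (n : ℕ) : IsTopMinor (⊤ : SimpleGraph (Fin n)) (host n) := by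
  refine ⟨Vx.hub, fun a b h => by cases h; rfl, fun x y _ => (strand_walk x y).choose,
    fun x y _ => (strand_walk x y).choose_spec.1, ?_, ?_⟩
  · rintro x y h v hv ⟨k, rfl⟩
    have := (strand_walk x y).choose_spec.2 _ hv
    rcases (this : k = x ∨ k = y) with rfl | rfl
    · exact Or.inl rfl
    · exact Or.inr rfl
  · intro x y x' y' h h' hne v hv hv'
    have m := (strand_walk x y).choose_spec.2 _ hv
    have m' := (strand_walk x' y').choose_spec.2 _ hv'
    cases v with
    | h r c =>
      have e := ix_inj ((m : r = _).symm.trans (m' : r = _))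
      exfalso
      apply hne
      rw [Sym2.eq_iff]
      obtain ⟨e1, e2⟩ := e
      rw [Fin.ext_iff, Fin.coe_min, Fin.coe_min] at e1
      rw [Fin.ext_iff, Fin.coe_max, Fin.coe_max] at e2
      simp only [Fin.ext_iff]
      omega
    | v r c =>
      exfalso
      apply hne
      rw [Sym2.eq_iff]
      rcases (m : c = _ ∨ c = _) with rfl | rfl <;>
      rcases (m' : _ = _ ∨ _ = _) with e | e <;>
      obtain ⟨e1, e2⟩ := ix_inj e <;> simp [e1, e2]
    | hub k => exact ⟨k, rfl⟩

/-- the contraction map to the complete graph -/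
def collapse (n : ℕ) : Vx n → Fin (n * n)
  | .h r _ => r
  | .v _ c => c
  | .hub i => ix i i

theorem host_contraction (n : ℕ) : IsContractionOf (⊤ : SimpleGraph (Fin (n * n))) (host n) := by
  refine ⟨collapse n, fun r => ⟨.h r r, rfl⟩, fun u => ?_, fun a b => ?_⟩
  · have h1 : ∀ c, Vx.h u c ∈ collapse n ⁻¹' {u} := fun c => rfl
    have h2 : ∀ r, Vx.v r u ∈ collapse n ⁻¹' {u} := fun c => rfl
    have key : ∀ w : collapse n ⁻¹' {u},
        ((host n).induce (collapse n ⁻¹' {u})).Reachable w ⟨.v u u, h2 u⟩ := by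
      rintro ⟨w, hw⟩
      cases w with
      | h r c =>
        have : r = u := hw
        subst this
        exact (row_reach _ r h1 c r).trans (diag_reach _ r r (h1 r) (h2 r))
      | v r c =>
        have : c = u := hw
        subst this
        exact col_reach _ c h2 r c
      | hub i =>
        have : ix i i = u := hw
        subst this
        exact hub_reach _ i i hw h2 _
    have : Nonempty (collapse n ⁻¹' {u}) := ⟨⟨_, h2 u⟩⟩
    exact ⟨fun a b => (key a).trans (key b).symm⟩
  · rw [SimpleGraph.top_adj]
    exact ⟨fun h => ⟨h, .h a b, .v a b, (Rl.D a b).adj, rfl, rfl⟩, fun h => h.1⟩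

end NPaux

/-- Corollary 2, second part: for every `ξ ≥ 1`, the class of
`ξ`-nearly planar graphs is closed neither under topological minors nor under
contractions. -/
theorem nearlyPlanar_not_closed (x : ℕ) (hx : 1 ≤ x) :
    (∃ (A B : Type) (_ : Finite A) (_ : Finite B)
        (G : SimpleGraph A) (H : SimpleGraph B),
      WBW.IsNearlyPlanar x G ∧ WBW.IsTopMinor H G ∧ ¬ WBW.IsNearlyPlanar x H) ∧
    (∃ (A B : Type) (_ : Finite A) (_ : Finite B)
        (G : SimpleGraph A) (H : SimpleGraph B),
      WBW.IsNearlyPlanar x G ∧ WBW.IsContractionOf H G ∧ ¬ WBW.IsNearlyPlanar x H) := by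
  have hn : 72 * x + 7 ≤ 72 * x + 7 := le_rfl
  refine ⟨⟨_, _, inferInstance, inferInstance, NPaux.host (72 * x + 7), ⊤,
    NPaux.host_near _ x hx, NPaux.host_topMinor _, NPaux.complete_not hn⟩,
    ⟨_, _, inferInstance, inferInstance, NPaux.host (72 * x + 7), ⊤,
    NPaux.host_near _ x hx, NPaux.host_contraction _,
    NPaux.complete_not (hn.trans (Nat.le_mul_self _))⟩⟩
end
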